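/- (Convergence Result 3.) Assume H := H₁ = H₂ is continuous and satisfies (A1) and (A8) (i.e., (A8)⁺ or (A8)⁻ holds), and assume the ergodic constant is 0, i.e., the single-equation ergodic problem H(x, Dv) = 0 in 𝕋^n admits a Lipschitz viscosity solution. Then for any continuous initial data (u₀₁, u₀₂) there exists v ∈ C(𝕋^n) such that (v, v) is a viscosity solution of (E) with c = 0 and the viscosity solution (u₁, u₂) of (C) satisfies u_i(·,t) → v uniformly on 𝕋^n as t → ∞, for i = 1,2. -/

import Mathlib

open MeasureTheory Filter Topology Set

noncomputable section

/-- Euclidean space `ℝ^n`; the torus `𝕋^n` is modelled by `ℤ^n`-periodic functions on it. -/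
abbrev En (n : ℕ) : Type := EuclideanSpace ℝ (Fin n)

/-- The integer vector `k ∈ ℤ^n` viewed as an element of `ℝ^n`. -/
def intVec (n : ℕ) (k : Fin n → ℤ) : En n := WithLp.toLp 2 (fun i => (k i : ℝ))

/-- A `ℤ^n`-periodic function on `ℝ^n`, i.e. a function on the torus `𝕋^n`. -/
def ZPeriodic {n : ℕ} (f : En n → ℝ) : Prop :=
  ∀ (x : En n) (k : Fin n → ℤ), f (x + intVec n k) = f x

/-- A Hamiltonian `H : 𝕋^n × ℝ^n → ℝ` (periodic in the first variable). -/
def ZPeriodicH {n : ℕ} (H : En n → En n → ℝ) : Prop :=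
  ∀ (x : En n) (k : Fin n → ℤ) (p : En n), H (x + intVec n k) p = H x p

/-- A function on `𝕋^n × ℝ` (space-time, periodic in space). -/
def ZPeriodicST {n : ℕ} (u : En n × ℝ → ℝ) : Prop :=
  ∀ (x : En n) (k : Fin n → ℤ) (t : ℝ), u (x + intVec n k, t) = u (x, t)

/-- (A1): coercivity, `lim_{r→∞} inf{H(x,p) : x ∈ 𝕋^n, |p| ≥ r} = ∞`. -/
def Coercive {n : ℕ} (H : En n → En n → ℝ) : Prop :=
  ∀ M : ℝ, ∃ r : ℝ, ∀ (x p : En n), r ≤ ‖p‖ → M ≤ H x p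

/-- Coercivity for an `x`-independent Hamiltonian. -/
def CoerciveP {n : ℕ} (H : En n → ℝ) : Prop :=
  ∀ M : ℝ, ∃ r : ℝ, ∀ p : En n, r ≤ ‖p‖ → M ≤ H p

/-- Lipschitz continuity (membership in `W^{1,∞}`). -/
def IsLip {n : ℕ} (f : En n → ℝ) : Prop := ∃ K : NNReal, LipschitzWith K f

/-- Viscosity subsolution inequality for one stationary equation
`H(x, Dw) + c (w - wo) ≤ ρ(x)` of a weakly coupled system. -/
def StatSubIneq {n : ℕ} (H : En n → En n → ℝ) (c : ℝ) (w wo : En n → ℝ) (ρ : En n → ℝ) : Prop :=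
  ∀ φ : En n → ℝ, ContDiff ℝ 1 φ →
    ∀ x₀ : En n, IsLocalMax (fun x => w x - φ x) x₀ →
      H x₀ (gradient φ x₀) + c * (w x₀ - wo x₀) ≤ ρ x₀

/-- Viscosity supersolution inequality for one stationary equation. -/
def StatSuperIneq {n : ℕ} (H : En n → En n → ℝ) (c : ℝ) (w wo : En n → ℝ) (ρ : En n → ℝ) : Prop :=
  ∀ φ : En n → ℝ, ContDiff ℝ 1 φ →
    ∀ x₀ : En n, IsLocalMin (fun x => w x - φ x) x₀ →
      ρ x₀ ≤ H x₀ (gradient φ x₀) + c * (w x₀ - wo x₀)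

/-- Viscosity subsolution of the stationary system
`Hᵢ(x, Dwᵢ) + cᵢ (wᵢ - wⱼ) = ρᵢ(x)`, `i = 1,2`. -/
def CellSub {n : ℕ} (H₁ H₂ : En n → En n → ℝ) (c₁ c₂ : ℝ) (w₁ w₂ : En n → ℝ)
    (ρ₁ ρ₂ : En n → ℝ) : Prop :=
  StatSubIneq H₁ c₁ w₁ w₂ ρ₁ ∧ StatSubIneq H₂ c₂ w₂ w₁ ρ₂

/-- Viscosity supersolution of the stationary system. -/
def CellSuper {n : ℕ} (H₁ H₂ : En n → En n → ℝ) (c₁ c₂ : ℝ) (w₁ w₂ : En n → ℝ)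
    (ρ₁ ρ₂ : En n → ℝ) : Prop :=
  StatSuperIneq H₁ c₁ w₁ w₂ ρ₁ ∧ StatSuperIneq H₂ c₂ w₂ w₁ ρ₂

/-- Viscosity solution (continuous, sub- and supersolution) of the stationary system. -/
def CellSolution {n : ℕ} (H₁ H₂ : En n → En n → ℝ) (c₁ c₂ : ℝ) (v₁ v₂ : En n → ℝ)
    (ρ₁ ρ₂ : En n → ℝ) : Prop :=
  Continuous v₁ ∧ Continuous v₂ ∧
    CellSub H₁ H₂ c₁ c₂ v₁ v₂ ρ₁ ρ₂ ∧ CellSuper H₁ H₂ c₁ c₂ v₁ v₂ ρ₁ ρ₂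

/-- Subsolution of the ergodic problem (E) with constant `c` (coupling constants 1). -/
def ErgSub {n : ℕ} (H₁ H₂ : En n → En n → ℝ) (v₁ v₂ : En n → ℝ) (c : ℝ) : Prop :=
  CellSub H₁ H₂ 1 1 v₁ v₂ (fun _ => c) (fun _ => c)

/-- Supersolution of the ergodic problem (E). -/
def ErgSuper {n : ℕ} (H₁ H₂ : En n → En n → ℝ) (v₁ v₂ : En n → ℝ) (c : ℝ) : Prop :=
  CellSuper H₁ H₂ 1 1 v₁ v₂ (fun _ => c) (fun _ => c)

/-- Viscosity solution of the ergodic problem (E):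
`H₁(x,Dv₁) + v₁ - v₂ = c`, `H₂(x,Dv₂) + v₂ - v₁ = c` on `𝕋^n`. -/
def ErgSolution {n : ℕ} (H₁ H₂ : En n → En n → ℝ) (v₁ v₂ : En n → ℝ) (c : ℝ) : Prop :=
  CellSolution H₁ H₂ 1 1 v₁ v₂ (fun _ => c) (fun _ => c)

/-- Viscosity subsolution inequality for one evolution equation
`∂ₜ u + H(x, Du) + u - uo ≤ 0` in `𝕋^n × (0,∞)`. -/
def EvolSubIneq {n : ℕ} (H : En n → En n → ℝ) (u uo : En n × ℝ → ℝ) : Prop :=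
  ∀ φ : En n × ℝ → ℝ, ContDiff ℝ 1 φ →
    ∀ (x₀ : En n) (t₀ : ℝ), 0 < t₀ →
      IsLocalMax (fun q => u q - φ q) (x₀, t₀) →
      fderiv ℝ φ (x₀, t₀) (0, 1) + H x₀ (gradient (fun y => φ (y, t₀)) x₀)
        + u (x₀, t₀) - uo (x₀, t₀) ≤ 0

/-- Viscosity supersolution inequality for one evolution equation. -/
def EvolSuperIneq {n : ℕ} (H : En n → En n → ℝ) (u uo : En n × ℝ → ℝ) : Prop :=
  ∀ φ : En n × ℝ → ℝ, ContDiff ℝ 1 φ →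
    ∀ (x₀ : En n) (t₀ : ℝ), 0 < t₀ →
      IsLocalMin (fun q => u q - φ q) (x₀, t₀) →
      0 ≤ fderiv ℝ φ (x₀, t₀) (0, 1) + H x₀ (gradient (fun y => φ (y, t₀)) x₀)
        + u (x₀, t₀) - uo (x₀, t₀)

/-- Viscosity subsolution of system (C) (with coupling constants `c₁ = c₂ = 1`). -/
def SysSub {n : ℕ} (H₁ H₂ : En n → En n → ℝ) (u₁ u₂ : En n × ℝ → ℝ) : Prop :=
  EvolSubIneq H₁ u₁ u₂ ∧ EvolSubIneq H₂ u₂ u₁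

/-- Viscosity supersolution of system (C). -/
def SysSuper {n : ℕ} (H₁ H₂ : En n → En n → ℝ) (u₁ u₂ : En n × ℝ → ℝ) : Prop :=
  EvolSuperIneq H₁ u₁ u₂ ∧ EvolSuperIneq H₂ u₂ u₁

/-- Viscosity solution of the Cauchy problem (C): continuous on `𝕋^n × [0,∞)`,
sub- and supersolution, attaining the initial data. -/
def SysSolution {n : ℕ} (H₁ H₂ : En n → En n → ℝ) (u₀₁ u₀₂ : En n → ℝ)
    (u₁ u₂ : En n × ℝ → ℝ) : Prop :=
  ContinuousOn u₁ {q : En n × ℝ | 0 ≤ q.2} ∧ ContinuousOn u₂ {q : En n × ℝ | 0 ≤ q.2} ∧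
    SysSub H₁ H₂ u₁ u₂ ∧ SysSuper H₁ H₂ u₁ u₂ ∧
    (∀ x, u₁ (x, 0) = u₀₁ x) ∧ (∀ x, u₂ (x, 0) = u₀₂ x)

/-- Viscosity subsolution of the single stationary equation `H(x,Dv) ≤ c` on `𝕋^n`. -/
def SingleSub {n : ℕ} (H : En n → En n → ℝ) (v : En n → ℝ) (c : ℝ) : Prop :=
  ∀ φ : En n → ℝ, ContDiff ℝ 1 φ →
    ∀ x₀ : En n, IsLocalMax (fun x => v x - φ x) x₀ → H x₀ (gradient φ x₀) ≤ c

/-- Viscosity supersolution of the single stationary equation `H(x,Dv) ≥ c` on `𝕋^n`. -/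
def SingleSuper {n : ℕ} (H : En n → En n → ℝ) (v : En n → ℝ) (c : ℝ) : Prop :=
  ∀ φ : En n → ℝ, ContDiff ℝ 1 φ →
    ∀ x₀ : En n, IsLocalMin (fun x => v x - φ x) x₀ → c ≤ H x₀ (gradient φ x₀)

/-- Viscosity solution of the single stationary equation `H(x,Dv) = c` on `𝕋^n`. -/
def SingleSolution {n : ℕ} (H : En n → En n → ℝ) (v : En n → ℝ) (c : ℝ) : Prop :=
  Continuous v ∧ SingleSub H v c ∧ SingleSuper H v c

/-- Uniform convergence `u(·,t) → v` on `𝕋^n` as `t → ∞`. -/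
def UnifTendsTo {n : ℕ} (u : En n × ℝ → ℝ) (v : En n → ℝ) : Prop :=
  ∀ ε : ℝ, 0 < ε → ∃ T : ℝ, ∀ t : ℝ, T ≤ t → ∀ x : En n, |u (x, t) - v x| ≤ ε

/-- (A8)⁺ at level `η` with constant `ψ`. -/
def A8plusAt {n : ℕ} (H : En n → En n → ℝ) (η ψ : ℝ) : Prop :=
  ∀ (x p q : En n), η ≤ H x (p + q) → H x q ≤ 0 →
    ∀ μ : ℝ, 0 < μ → μ ≤ 1 → H x (p + q) + ψ * (1 - μ) ≤ μ * H x (μ⁻¹ • p + q)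

/-- (A8)⁻ at level `η` with constant `ψ`. -/
def A8minusAt {n : ℕ} (H : En n → En n → ℝ) (η ψ : ℝ) : Prop :=
  ∀ (x p q : En n), H x (p + q) ≤ -η → 0 ≤ H x q →
    ∀ μ : ℝ, 1 ≤ μ → μ * H x (μ⁻¹ • p + q) ≤ H x (p + q) - ψ * (μ - 1) / μ

/-- (A8)⁺ with threshold `η₀`. -/
def A8plus {n : ℕ} (H : En n → En n → ℝ) (η₀ : ℝ) : Prop :=
  ∀ η : ℝ, 0 < η → η ≤ η₀ → ∃ ψ : ℝ, 0 < ψ ∧ A8plusAt H η ψ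

/-- (A8)⁻ with threshold `η₀`. -/
def A8minus {n : ℕ} (H : En n → En n → ℝ) (η₀ : ℝ) : Prop :=
  ∀ η : ℝ, 0 < η → η ≤ η₀ → ∃ ψ : ℝ, 0 < ψ ∧ A8minusAt H η ψ

/-- The function `F` of the Key Lemma: `F(r) = C r` for `r ≥ 0`, `F(r) = r / C` for `r < 0`. -/
def Fc (C r : ℝ) : ℝ := if 0 ≤ r then C * r else r / C

/-- `α_η⁺(s)` (resp. `β_η⁺(s)` with `u = u₂`):
`min_{x ∈ 𝕋^n, t ≥ s} (u(x,t) - v(x) + η (t-s)) / (u(x,s) - v(x))`. -/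
def alphaPlus {n : ℕ} (u : En n × ℝ → ℝ) (v : En n → ℝ) (η s : ℝ) : ℝ :=
  sInf {r : ℝ | ∃ (x : En n) (t : ℝ), s ≤ t ∧
    r = (u (x, t) - v x + η * (t - s)) / (u (x, s) - v x)}

/-- `α_η⁻(s)` (resp. `β_η⁻(s)` with `u = u₂`):
`max_{x ∈ 𝕋^n, t ≥ s} (u(x,t) - v(x) - η (t-s)) / (u(x,s) - v(x))`. -/
def alphaMinus {n : ℕ} (u : En n × ℝ → ℝ) (v : En n → ℝ) (η s : ℝ) : ℝ :=
  sSup {r : ℝ | ∃ (x : En n) (t : ℝ), s ≤ t ∧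
    r = (u (x, t) - v x - η * (t - s)) / (u (x, s) - v x)}

/-- (A9)⁺. -/
def A9plus {n : ℕ} (H : En n → En n → ℝ) : Prop :=
  ∃ K : Set (En n), IsClosed K ∧ (∀ x ∈ K, ∀ k : Fin n → ℤ, x + intVec n k ∈ K) ∧
    (∀ x ∈ K, (∀ p : En n, 0 ≤ H x p) ∧ ∃ p : En n, H x p = 0) ∧
    (∀ ε : ℝ, 0 < ε → ∃ η₀ : ℝ, 0 < η₀ ∧ ∃ ψ : ℝ → ℝ, (∀ r : ℝ, 0 < r → 0 < ψ r) ∧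
      ∀ η : ℝ, 0 < η → η ≤ η₀ → ∀ (x p q : En n), ε ≤ Metric.infDist x K →
        η ≤ H x (p + q) → H x q ≤ 0 →
        ∀ μ : ℝ, 0 < μ → μ ≤ 1 → H x (p + q) + ψ η * (1 - μ) ≤ μ * H x (μ⁻¹ • p + q))

/-- (A9)⁻. -/
def A9minus {n : ℕ} (H : En n → En n → ℝ) : Prop :=
  ∃ K : Set (En n), IsClosed K ∧ (∀ x ∈ K, ∀ k : Fin n → ℤ, x + intVec n k ∈ K) ∧
    (∀ x ∈ K, (∀ p : En n, 0 ≤ H x p) ∧ ∃ p : En n, H x p = 0) ∧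
    (∀ ε : ℝ, 0 < ε → ∃ η₀ : ℝ, 0 < η₀ ∧ ∃ ψ : ℝ → ℝ, (∀ r : ℝ, 0 < r → 0 < ψ r) ∧
      ∀ η : ℝ, 0 < η → η ≤ η₀ → ∀ (x p q : En n), ε ≤ Metric.infDist x K →
        H x (p + q) ≤ -η → 0 ≤ H x q →
        ∀ μ : ℝ, 1 ≤ μ → μ * H x (μ⁻¹ • p + q) ≤ H x (p + q) - ψ η * (μ - 1) / μ)

/-- (A6): uniform convexity of an `x`-independent Hamiltonian. -/
def UnifConvex {n : ℕ} (H : En n → ℝ) : Prop :=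
  ∃ α : ℝ, 0 < α ∧ ∀ᵐ q : En n ∂volume, DifferentiableAt ℝ H q ∧
    ∀ p : En n, H q + fderiv ℝ H q (p - q) + α * ‖p - q‖ ^ 2 ≤ H p

end

open MeasureTheory Filter Topology Set

/-- subsolution with right-hand side -/
def SubF {n : ℕ} (H : En n → En n → ℝ) (A f : En n × ℝ → ℝ) : Prop :=
  ∀ φ : En n × ℝ → ℝ, ContDiff ℝ 1 φ → ∀ (x₀ : En n) (t₀ : ℝ), 0 < t₀ →
    IsLocalMax (fun q => A q - φ q) (x₀, t₀) →
    fderiv ℝ φ (x₀, t₀) (0, 1) + H x₀ (gradient (fun y => φ (y, t₀)) x₀) ≤ f (x₀, t₀)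

/-- supersolution with right-hand side -/
def SuperF {n : ℕ} (H : En n → En n → ℝ) (A f : En n × ℝ → ℝ) : Prop :=
  ∀ φ : En n × ℝ → ℝ, ContDiff ℝ 1 φ → ∀ (x₀ : En n) (t₀ : ℝ), 0 < t₀ →
    IsLocalMin (fun q => A q - φ q) (x₀, t₀) →
    f (x₀, t₀) ≤ fderiv ℝ φ (x₀, t₀) (0, 1) + H x₀ (gradient (fun y => φ (y, t₀)) x₀)

lemma gradient_neg' {n : ℕ} (φ : En n → ℝ) (x : En n) :
    gradient (fun y => - φ y) x = - gradient φ x := by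
  simp only [gradient]
  rw [fderiv_fun_neg, map_neg]

lemma SuperF.neg {n : ℕ} {H : En n → En n → ℝ} {A f : En n × ℝ → ℝ} (h : SuperF H A f) :
    SubF (fun x p => - H x (-p)) (fun q => - A q) (fun q => - f q) := by
  intro φ hφ x₀ t₀ ht hmax
  have h1 := h (fun q => - φ q) hφ.neg x₀ t₀ ht (by
    have := hmax.neg
    refine this.congr ?_
    exact Eventually.of_forall fun q => by simp; ring)
  rw [fderiv_fun_neg, gradient_neg'] at h1
  simp only [neg_apply] at h1 ⊢
  linarith

lemma fderiv_time {n : ℕ} {φ : En n × ℝ → ℝ} (hφ : ContDiff ℝ 1 φ) (x : En n) (t : ℝ) (d : ℝ)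
    (hd : HasDerivAt (fun τ => φ (x, τ)) d t) : fderiv ℝ φ (x, t) (0, 1) = d := by
  have h1 : HasFDerivAt φ (fderiv ℝ φ (x, t)) (x, t) :=
    (hφ.differentiable one_ne_zero).differentiableAt.hasFDerivAt
  have h2 : HasDerivAt (fun τ : ℝ => ((x, τ) : En n × ℝ)) (0, 1) t :=
    (hasDerivAt_const t x).prodMk (hasDerivAt_id t)
  exact (h1.comp_hasDerivAt t h2).unique hd

lemma SubF.test {n : ℕ} {H : En n → En n → ℝ} {A f : En n × ℝ → ℝ} (hA : SubF H A f)
    (a b : ℝ → ℝ) (h : En n → ℝ) (ha : ContDiff ℝ 1 a) (hb : ContDiff ℝ 1 b)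
    (hh : ContDiff ℝ 1 h) (x₀ : En n) (t₀ a' b' : ℝ) (G : En n) (ht : 0 < t₀)
    (ha' : HasDerivAt a a' t₀) (hb' : HasDerivAt b b' t₀) (hG : HasGradientAt h G x₀)
    (hmax : IsLocalMax (fun q : En n × ℝ => A q - (a q.2 + b q.2 * h q.1)) (x₀, t₀)) :
    a' + b' * h x₀ + H x₀ (b t₀ • G) ≤ f (x₀, t₀) := by
  have hφ : ContDiff ℝ 1 (fun q : En n × ℝ => a q.2 + b q.2 * h q.1) := by fun_prop
  have := hA _ hφ x₀ t₀ ht hmax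
  rw [fderiv_time hφ x₀ t₀ (a' + b' * h x₀) (ha'.add (hb'.mul_const (h x₀)))] at this
  have e : gradient (fun y => a t₀ + b t₀ * h y) x₀ = b t₀ • G := by
    apply HasGradientAt.gradient
    rw [hasGradientAt_iff_hasFDerivAt] at hG ⊢
    have := (hG.const_mul (b t₀)).const_add (a t₀)
    refine this.congr_fderiv ?_
    ext v
    simp
  simp only [e] at this
  exact this

lemma SuperF.test {n : ℕ} {H : En n → En n → ℝ} {A f : En n × ℝ → ℝ} (hA : SuperF H A f)
    (a b : ℝ → ℝ) (h : En n → ℝ) (ha : ContDiff ℝ 1 a) (hb : ContDiff ℝ 1 b)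
    (hh : ContDiff ℝ 1 h) (x₀ : En n) (t₀ a' b' : ℝ) (G : En n) (ht : 0 < t₀)
    (ha' : HasDerivAt a a' t₀) (hb' : HasDerivAt b b' t₀) (hG : HasGradientAt h G x₀)
    (hmax : IsLocalMin (fun q : En n × ℝ => A q - (a q.2 + b q.2 * h q.1)) (x₀, t₀)) :
    f (x₀, t₀) ≤ a' + b' * h x₀ + H x₀ (b t₀ • G) := by
  have := hA.neg.test (fun t => - a t) (fun t => - b t) h ha.neg hb.neg hh x₀ t₀ (-a') (-b') G ht
    ha'.neg hb'.neg hG (by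
      have := hmax.neg
      refine this.congr (Eventually.of_forall fun q => by simp; ring))
  simp only [neg_smul, neg_neg] at this
  linarith

lemma hasGradientAt_sq {n : ℕ} (k : ℝ) (y x : En n) :
    HasGradientAt (fun x : En n => k * ‖x - y‖ ^ 2) ((2 * k) • (x - y)) x := by
  rw [hasGradientAt_iff_hasFDerivAt]
  have h : HasFDerivAt (fun x : En n => k * ‖x - y‖ ^ 2) _ x :=
    (((hasFDerivAt_id x).sub_const y).norm_sq).const_mul k
  refine h.congr_fderiv ?_
  ext v
  simp
  ring

lemma SubF.shift {n : ℕ} {H : En n → En n → ℝ} {A f : En n × ℝ → ℝ} (hA : SubF H A f)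
    (s : ℝ) (hs : 0 ≤ s) : SubF H (fun q => A (q.1, q.2 + s)) (fun q => f (q.1, q.2 + s)) := by
  intro φ hφ x₀ t₀ ht hmax
  have hψ : ContDiff ℝ 1 (fun q : En n × ℝ => φ (q.1, q.2 - s)) := by fun_prop
  have := hA _ hψ x₀ (t₀ + s) (by linarith) (by
    have hc : Tendsto (fun q : En n × ℝ => ((q.1, q.2 - s) : En n × ℝ)) (𝓝 (x₀, t₀ + s))
        (𝓝 (x₀, t₀)) := by
      have : Continuous (fun q : En n × ℝ => ((q.1, q.2 - s) : En n × ℝ)) := by fun_prop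
      have h2 := this.tendsto (x₀, t₀ + s)
      simpa using h2
    have := hc.eventually hmax
    refine this.mono fun q hq => ?_
    simpa using hq)
  have hd : HasDerivAt (fun τ => φ (x₀, τ)) (fderiv ℝ φ (x₀, t₀) (0, 1)) t₀ := by
    have h1 : HasFDerivAt φ (fderiv ℝ φ (x₀, t₀)) (x₀, t₀) :=
      (hφ.differentiable one_ne_zero).differentiableAt.hasFDerivAt
    exact h1.comp_hasDerivAt t₀ ((hasDerivAt_const t₀ x₀).prodMk (hasDerivAt_id t₀))
  rw [fderiv_time hψ x₀ (t₀ + s) (fderiv ℝ φ (x₀, t₀) (0, 1)) (by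
    have hd' : HasDerivAt (fun τ => φ (x₀, τ)) (fderiv ℝ φ (x₀, t₀) (0, 1)) (t₀ + s - s) := by
      simpa using hd
    exact hd'.comp_sub_const (t₀ + s) s)] at this
  simpa using this

lemma SuperF.of_neg {n : ℕ} {H : En n → En n → ℝ} {A f : En n × ℝ → ℝ}
    (h : SubF (fun x p => - H x (-p)) (fun q => - A q) (fun q => - f q)) : SuperF H A f := by
  intro φ hφ x₀ t₀ ht hmax
  have h1 := h (fun q => - φ q) hφ.neg x₀ t₀ ht (by
    have := hmax.neg
    refine this.congr ?_
    exact Eventually.of_forall fun q => by simp; ring)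
  rw [fderiv_fun_neg, gradient_neg'] at h1
  simp only [neg_apply, neg_neg] at h1 ⊢
  linarith

lemma SuperF.shift {n : ℕ} {H : En n → En n → ℝ} {A f : En n × ℝ → ℝ} (hA : SuperF H A f)
    (s : ℝ) (hs : 0 ≤ s) : SuperF H (fun q => A (q.1, q.2 + s)) (fun q => f (q.1, q.2 + s)) :=
  SuperF.of_neg (hA.neg.shift s hs)

lemma SubF.mono {n : ℕ} {H : En n → En n → ℝ} {A f g : En n × ℝ → ℝ} (hA : SubF H A f)
    (hfg : ∀ x t, 0 < t → f (x, t) ≤ g (x, t)) : SubF H A g :=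
  fun φ hφ x₀ t₀ ht hm => (hA φ hφ x₀ t₀ ht hm).trans (hfg _ _ ht)

lemma SuperF.mono {n : ℕ} {H : En n → En n → ℝ} {A f g : En n × ℝ → ℝ} (hA : SuperF H A f)
    (hfg : ∀ x t, 0 < t → g (x, t) ≤ f (x, t)) : SuperF H A g :=
  fun φ hφ x₀ t₀ ht hm => (hfg _ _ ht).trans (hA φ hφ x₀ t₀ ht hm)

lemma SubF.congr {n : ℕ} {H : En n → En n → ℝ} {A B f : En n × ℝ → ℝ} (hA : SubF H A f)
    (hAB : ∀ x t, 0 < t → A (x, t) = B (x, t)) : SubF H B f := by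
  intro φ hφ x₀ t₀ ht hm
  refine hA φ hφ x₀ t₀ ht ?_
  refine hm.congr ?_
  have : ∀ᶠ q : En n × ℝ in 𝓝 (x₀, t₀), 0 < q.2 :=
    continuous_snd.continuousAt.eventually (lt_mem_nhds ht)
  filter_upwards [this] with q hq
  rw [show q = (q.1, q.2) from rfl, hAB _ _ hq]

lemma SuperF.congr {n : ℕ} {H : En n → En n → ℝ} {A B f : En n × ℝ → ℝ} (hA : SuperF H A f)
    (hAB : ∀ x t, 0 < t → A (x, t) = B (x, t)) : SuperF H B f :=
  SuperF.of_neg (hA.neg.congr fun x t ht => by simp [hAB x t ht])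

lemma local_time {n : ℕ} {φ : En n × ℝ → ℝ} (hφ : ContDiff ℝ 1 φ) {w : En n → ℝ} {x₀ : En n}
    {t₀ : ℝ} (h : IsLocalMax (fun q : En n × ℝ => w q.1 - φ q) (x₀, t₀)) :
    fderiv ℝ φ (x₀, t₀) (0, 1) = 0 ∧ IsLocalMax (fun x => w x - φ (x, t₀)) x₀ := by
  constructor
  · have hd : HasDerivAt (fun τ => φ (x₀, τ)) (fderiv ℝ φ (x₀, t₀) (0, 1)) t₀ := by
      have h1 : HasFDerivAt φ (fderiv ℝ φ (x₀, t₀)) (x₀, t₀) :=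
        (hφ.differentiable one_ne_zero).differentiableAt.hasFDerivAt
      exact h1.comp_hasDerivAt t₀ ((hasDerivAt_const t₀ x₀).prodMk (hasDerivAt_id t₀))
    have hm : IsLocalMin (fun τ => φ (x₀, τ)) t₀ := by
      have hc : Tendsto (fun τ : ℝ => ((x₀, τ) : En n × ℝ)) (𝓝 t₀) (𝓝 (x₀, t₀)) :=
        (by fun_prop : Continuous (fun τ : ℝ => ((x₀, τ) : En n × ℝ))).tendsto t₀
      refine (hc.eventually h).mono fun τ hτ => ?_
      simp at hτ
      linarith
    exact hm.hasDerivAt_eq_zero hd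
  · have hc : Tendsto (fun x : En n => ((x, t₀) : En n × ℝ)) (𝓝 x₀) (𝓝 (x₀, t₀)) :=
      (by fun_prop : Continuous (fun x : En n => ((x, t₀) : En n × ℝ))).tendsto x₀
    exact hc.eventually h

lemma SingleSub.evol {n : ℕ} {H : En n → En n → ℝ} {w : En n → ℝ} {c : ℝ} (h : SingleSub H w c) :
    SubF H (fun q => w q.1) (fun _ => c) := by
  intro φ hφ x₀ t₀ ht hm
  obtain ⟨h1, h2⟩ := local_time hφ hm
  rw [h1, zero_add]
  exact h _ (by fun_prop) x₀ h2

lemma SingleSuper.evol {n : ℕ} {H : En n → En n → ℝ} {w : En n → ℝ} {c : ℝ}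
    (h : SingleSuper H w c) : SuperF H (fun q => w q.1) (fun _ => c) := by
  intro φ hφ x₀ t₀ ht hm
  have hm' : IsLocalMax (fun q : En n × ℝ => (fun x => - w x) q.1 - (fun q => - φ q) q)
      (x₀, t₀) := by
    refine hm.neg.congr (Eventually.of_forall fun q => by simp; ring)
  obtain ⟨h1, h2⟩ := local_time (w := fun x => - w x) hφ.neg hm'
  rw [fderiv_fun_neg] at h1
  simp only [neg_apply, neg_eq_zero] at h1
  rw [h1, zero_add]
  refine h _ (by fun_prop) x₀ ?_
  refine h2.neg.congr (Eventually.of_forall fun q => by simp; ring)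

open MeasureTheory Filter Topology Set

/-- time coupling -/
def Th (c η : ℝ) (θ : ℝ → ℝ) (s t : ℝ) : ℝ := c * (t - s) ^ 2 + η * (t - s) + θ s

/-- doubled functional -/
noncomputable def FF {n : ℕ} (A B : En n × ℝ → ℝ) (w : En n → ℝ) (α γ θ : ℝ → ℝ) (c η k : ℝ)
    (y a b : En n) (s t : ℝ) : ℝ :=
  α s * A (y + a, s) - B (y, t) + γ s * w (y + b) - Th c η θ s t - k * (‖a‖ ^ 2 + ‖b‖ ^ 2)

lemma contDiff_sq {n : ℕ} (k : ℝ) (y : En n) : ContDiff ℝ 1 (fun x : En n => k * ‖x - y‖ ^ 2) :=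
  contDiff_const.mul ((contDiff_id.sub contDiff_const).norm_sq ℝ)

section
variable {n : ℕ} {H : En n → En n → ℝ} {A B f g : En n × ℝ → ℝ} {w : En n → ℝ}
  {α γ θ : ℝ → ℝ} {c η k : ℝ} {K O : Set (ℝ × ℝ)} {y a b : En n} {s t : ℝ}

lemma visc_A (hA : SubF H A f) (hα : ContDiff ℝ 1 α) (hγ : ContDiff ℝ 1 γ) (hθ : ContDiff ℝ 1 θ)
    (hα0 : ∀ s, 0 < α s) (hO : IsOpen O) (hOK : O ⊆ K) (hs : 0 < s)
    (hq : (s, t) ∈ O) (ha : ‖a‖ < 1) (hb : ‖b‖ < 1)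
    (hmax : ∀ y' a' b' s' t', ‖a'‖ ≤ 1 → ‖b'‖ ≤ 1 → (s', t') ∈ K →
      FF A B w α γ θ c η k y' a' b' s' t' ≤ FF A B w α γ θ c η k y a b s t) :
    (-(2 * c * (t - s) + η) + deriv θ s - deriv γ s * w (y + b) - deriv α s * A (y + a, s))
      + α s * H (y + a) ((α s)⁻¹ • ((2 * k) • a)) ≤ α s * f (y + a, s) := by
  set m := FF A B w α γ θ c η k y a b s t with hm
  set C := m + B (y, t) + k * ‖b‖ ^ 2 with hC
  have hne : ∀ s, α s ≠ 0 := fun s => (hα0 s).ne'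
  have hβ : ContDiff ℝ 1 (fun σ => (α σ)⁻¹) := hα.inv hne
  have hTh : ContDiff ℝ 1 (fun σ => Th c η θ σ t) := by unfold Th; fun_prop
  have dα : HasDerivAt α (deriv α s) s := (hα.differentiable one_ne_zero s).hasDerivAt
  have dγ : HasDerivAt γ (deriv γ s) s := (hγ.differentiable one_ne_zero s).hasDerivAt
  have dθ : HasDerivAt θ (deriv θ s) s := (hθ.differentiable one_ne_zero s).hasDerivAt
  have dTh : HasDerivAt (fun σ => Th c η θ σ t) (-(2 * c * (t - s) + η) + deriv θ s) s := by
    unfold Th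
    have h1 : HasDerivAt (fun σ : ℝ => t - σ) (-1) s := by
      simpa using (hasDerivAt_id s).const_sub t
    have := (((h1.pow 2).const_mul c).add (h1.const_mul η)).add dθ
    refine this.congr_deriv ?_
    simp; ring
  have dβ := dα.inv (hne s)
  have da : HasDerivAt (fun σ => (α σ)⁻¹ * (C + Th c η θ σ t - γ σ * w (y + b))) _ s :=
    dβ.mul ((dTh.const_add C).sub (dγ.mul_const (w (y + b))))
  have hal : ContDiff ℝ 1 (fun σ => (α σ)⁻¹ * (C + Th c η θ σ t - γ σ * w (y + b))) := by
    fun_prop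
  have eqA : α s * A (y + a, s) = C + Th c η θ s t - γ s * w (y + b) + k * ‖a‖ ^ 2 := by
    rw [hC, hm, FF]; ring
  have key := hA.test _ (fun σ => (α σ)⁻¹) (fun x => k * ‖x - y‖ ^ 2) hal hβ
    (contDiff_sq _ _) (y + a) s _ _ _ hs da dβ (hasGradientAt_sq k y (y + a)) (by
      have e1 : ∀ᶠ q : En n × ℝ in 𝓝 (y + a, s), ‖q.1 - y‖ < 1 := by
        have : Continuous (fun q : En n × ℝ => ‖q.1 - y‖) := by fun_prop
        exact this.continuousAt.eventually (gt_mem_nhds (by simpa using ha))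
      have e2 : ∀ᶠ q : En n × ℝ in 𝓝 (y + a, s), (q.2, t) ∈ O := by
        have : Continuous (fun q : En n × ℝ => ((q.2, t) : ℝ × ℝ)) := by fun_prop
        exact this.continuousAt.eventually (hO.mem_nhds hq)
      filter_upwards [e1, e2] with q h1 h2
      have h3 := hmax y (q.1 - y) b q.2 t h1.le hb.le (hOK h2)
      have h4 : α q.2 * A q ≤ C + Th c η θ q.2 t - γ q.2 * w (y + b) + k * ‖q.1 - y‖ ^ 2 := by
        rw [FF, add_sub_cancel] at h3
        rw [hC]
        change α q.2 * A q - _ + _ - _ - _ ≤ _ at h3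
        linarith
      have h5 : A q ≤ (α q.2)⁻¹ * (C + Th c η θ q.2 t - γ q.2 * w (y + b))
          + (α q.2)⁻¹ * (k * ‖q.1 - y‖ ^ 2) := by
        rw [← mul_add, inv_mul_eq_div, le_div_iff₀ (hα0 _)]; linarith
      have h6 : A (y + a, s) = (α s)⁻¹ * (C + Th c η θ s t - γ s * w (y + b))
          + (α s)⁻¹ * (k * ‖y + a - y‖ ^ 2) := by
        rw [← mul_add, inv_mul_eq_div, eq_div_iff (hne _), add_sub_cancel_left]; linarith
      linarith)
  simp only [add_sub_cancel_left] at key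
  have hpos := hα0 s
  have := mul_le_mul_of_nonneg_left key hpos.le
  have e : C + Th c η θ s t - γ s * w (y + b) = α s * A (y + a, s) - k * ‖a‖ ^ 2 := by linarith
  simp only [Pi.inv_apply] at this
  rw [e] at this
  refine le_trans (le_of_eq ?_) this
  have := hne s
  field_simp
  ring

lemma visc_B (hB : SuperF H B g) (hO : IsOpen O) (hOK : O ⊆ K) (ht : 0 < t)
    (hq : (s, t) ∈ O) (ha : ‖a‖ < 1) (hb : ‖b‖ < 1)
    (hmax : ∀ y' a' b' s' t', ‖a'‖ ≤ 1 → ‖b'‖ ≤ 1 → (s', t') ∈ K →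
      FF A B w α γ θ c η k y' a' b' s' t' ≤ FF A B w α γ θ c η k y a b s t) :
    g (y, t) ≤ -(2 * c * (t - s) + η) + H y ((2 * k) • a + (2 * k) • b) := by
  set m := FF A B w α γ θ c η k y a b s t with hm
  set C := α s * A (y + a, s) + γ s * w (y + b) - m with hC
  have hTh : ContDiff ℝ 1 (fun τ => C - Th c η θ s τ) := by unfold Th; fun_prop
  have dTh : HasDerivAt (fun τ => C - Th c η θ s τ) (-(2 * c * (t - s) + η)) t := by
    unfold Th
    have h1 : HasDerivAt (fun σ : ℝ => σ - s) (1) t := by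
      simpa using (hasDerivAt_id t).sub_const s
    have := (((((h1.pow 2).const_mul c).add (h1.const_mul η))).add_const (θ s)).const_sub C
    refine this.congr_deriv ?_
    simp; ring
  have hgr : HasGradientAt (fun y' : En n => (-k) * ‖y' - (y + a)‖ ^ 2 + (-k) * ‖y' - (y + b)‖ ^ 2)
      ((2 * k) • a + (2 * k) • b) y := by
    have h1 := hasGradientAt_sq (-k) (y + a) y
    have h2 := hasGradientAt_sq (-k) (y + b) y
    rw [hasGradientAt_iff_hasFDerivAt] at *
    refine (h1.add h2).congr_fderiv ?_
    rw [← map_add]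
    congr 1
    simp
  have key := hB.test _ (fun σ => 1) _ hTh contDiff_const
    ((contDiff_sq _ _).add (contDiff_sq _ _)) y t _ _ _ ht dTh (hasDerivAt_const _ _) hgr (by
      have e1 : ∀ᶠ q : En n × ℝ in 𝓝 (y, t), ‖(y + a) - q.1‖ < 1 := by
        have : Continuous (fun q : En n × ℝ => ‖(y + a) - q.1‖) := by fun_prop
        exact this.continuousAt.eventually (gt_mem_nhds (by simpa using ha))
      have e1' : ∀ᶠ q : En n × ℝ in 𝓝 (y, t), ‖(y + b) - q.1‖ < 1 := by
        have : Continuous (fun q : En n × ℝ => ‖(y + b) - q.1‖) := by fun_prop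
        exact this.continuousAt.eventually (gt_mem_nhds (by simpa using hb))
      have e2 : ∀ᶠ q : En n × ℝ in 𝓝 (y, t), (s, q.2) ∈ O := by
        have : Continuous (fun q : En n × ℝ => ((s, q.2) : ℝ × ℝ)) := by fun_prop
        exact this.continuousAt.eventually (hO.mem_nhds hq)
      filter_upwards [e1, e1', e2] with q h1 h1' h2
      have h3 := hmax q.1 ((y + a) - q.1) ((y + b) - q.1) s q.2 h1.le h1'.le (hOK h2)
      rw [FF, add_sub_cancel, add_sub_cancel, norm_sub_rev, norm_sub_rev (y + b)] at h3
      change _ - B q + _ - _ - _ ≤ _ at h3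
      have h6 : B (y, t) = C - Th c η θ s t - k * (‖a‖ ^ 2 + ‖b‖ ^ 2) := by
        rw [hC, hm, FF]; ring
      simp only [sub_add_cancel_left, norm_neg]
      rw [h6, hC]
      linarith)
  simpa using key

lemma visc_w (hw : SingleSub H w 0)
    (hγ0 : 0 ≤ γ s) (hq : (s, t) ∈ K) (ha : ‖a‖ < 1) (hb : ‖b‖ < 1) (hk : 0 < k)
    (hmax : ∀ y' a' b' s' t', ‖a'‖ ≤ 1 → ‖b'‖ ≤ 1 → (s', t') ∈ K →
      FF A B w α γ θ c η k y' a' b' s' t' ≤ FF A B w α γ θ c η k y a b s t) :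
    (γ s = 0 ∧ b = 0) ∨ (0 < γ s ∧ H (y + b) ((γ s)⁻¹ • ((2 * k) • b)) ≤ 0) := by
  rcases hγ0.eq_or_lt with h0 | h0
  · left
    refine ⟨h0.symm, ?_⟩
    have := hmax y a 0 s t ha.le (by simp) hq
    simp only [FF, ← h0] at this
    simp at this
    have h2 : ‖b‖ ^ 2 ≤ 0 := by nlinarith
    have : ‖b‖ = 0 := by nlinarith [norm_nonneg b]
    simpa using this
  · right
    refine ⟨h0, ?_⟩
    have hgr : HasGradientAt (fun z : En n => ((γ s)⁻¹ * k) * ‖z - y‖ ^ 2)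
        ((γ s)⁻¹ • ((2 * k) • b)) (y + b) := by
      have := hasGradientAt_sq ((γ s)⁻¹ * k) y (y + b)
      rw [add_sub_cancel_left] at this
      convert this using 1
      rw [smul_smul]; congr 1; ring
    have := hw (fun z : En n => ((γ s)⁻¹ * k) * ‖z - y‖ ^ 2)
      (contDiff_sq _ _) (y + b) (by
        have e1 : ∀ᶠ z : En n in 𝓝 (y + b), ‖z - y‖ < 1 := by
          have : Continuous (fun z : En n => ‖z - y‖) := by fun_prop
          exact this.continuousAt.eventually (gt_mem_nhds (by simpa using hb))
        filter_upwards [e1] with z h1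
        have h3 := hmax y a (z - y) s t ha.le h1.le hq
        simp only [FF, add_sub_cancel] at h3
        have h4 : γ s * (w z - w (y + b)) ≤ k * (‖z - y‖ ^ 2 - ‖b‖ ^ 2) := by linarith
        have h5 : w z - w (y + b) ≤ (γ s)⁻¹ * (k * (‖z - y‖ ^ 2 - ‖b‖ ^ 2)) := by
          rw [inv_mul_eq_div, le_div_iff₀ h0]; linarith
        simp only [add_sub_cancel_left]
        linarith)
    rwa [hgr.gradient] at this
end

open MeasureTheory Filter Topology Set

lemma exists_intVec (n : ℕ) (x : En n) : ∃ k : Fin n → ℤ, ‖x + intVec n k‖ ≤ √n := by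
  refine ⟨fun i => - ⌊x i⌋, ?_⟩
  rw [EuclideanSpace.norm_eq]
  apply Real.sqrt_le_sqrt
  calc ∑ i, ‖(x + intVec n fun i => -⌊x i⌋) i‖ ^ 2 ≤ ∑ i : Fin n, (1 : ℝ) := by
        apply Finset.sum_le_sum
        intro i _
        have e : (x + intVec n fun i => -⌊x i⌋) i = Int.fract (x i) := by
          rw [← Int.self_sub_floor]; simp only [intVec, PiLp.add_apply]; push_cast; ring
        rw [e, Real.norm_eq_abs, sq_abs]
        have h0 := Int.fract_nonneg (x i)
        have h1 := (Int.fract_lt_one (x i)).le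
        nlinarith
    _ = n := by simp

/-- an ultrafilter on ℕ finer than atTop -/
noncomputable abbrev UF : Filter ℕ := ((hyperfilter ℕ : Ultrafilter ℕ) : Filter ℕ)

lemma UF_le : UF ≤ atTop := by
  have := hyperfilter_le_cofinite (α := ℕ)
  rwa [Nat.cofinite_eq_atTop] at this

lemma UF_lim {X : Type*} [TopologicalSpace X] {K : Set X} (hK : IsCompact K) (u : ℕ → X)
    (hu : ∀ᶠ k in UF, u k ∈ K) : ∃ x ∈ K, Tendsto u UF (𝓝 x) := by
  obtain ⟨x, hx, h⟩ := hK.ultrafilter_le_nhds ((hyperfilter ℕ).map u) (by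
    rw [le_principal_iff]; exact hu)
  exact ⟨x, hx, h⟩

theorem master {n : ℕ} {H : En n → En n → ℝ} (hHc : Continuous fun q : En n × En n => H q.1 q.2)
    (hcoer : Coercive H) {A B f g : En n × ℝ → ℝ} {w : En n → ℝ} {α γ θ : ℝ → ℝ} {c η m1 : ℝ}
    {K O : Set (ℝ × ℝ)} (cA : Continuous A) (cB : Continuous B) (cf : Continuous f)
    (cg : Continuous g) (cw : Continuous w) (pA : ZPeriodicST A) (pB : ZPeriodicST B)
    (pw : ZPeriodic w) (hA : SubF H A f) (hB : SuperF H B g) (hw : SingleSub H w 0)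
    (hα : ContDiff ℝ 1 α) (hγ : ContDiff ℝ 1 γ) (hθ : ContDiff ℝ 1 θ)
    (hα0 : ∀ s, 0 < α s) (hγ0 : ∀ s, 0 ≤ γ s) (hK : IsCompact K) (hO : IsOpen O) (hOK : O ⊆ K)
    (hOp : ∀ s t, (s, t) ∈ O → 0 < s ∧ 0 < t)
    (hm1 : ∃ x s t, (s, t) ∈ K ∧ m1 ≤ α s * A (x, s) - B (x, t) + γ s * w x - Th c η θ s t)
    (hbd : ∀ x s t, (s, t) ∈ K → (s, t) ∉ O →
      α s * A (x, s) - B (x, t) + γ s * w x - Th c η θ s t < m1) :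
    ∃ (x : En n) (s t : ℝ) (p q : En n), ‖x‖ ≤ √n ∧ (s, t) ∈ O ∧
      m1 ≤ α s * A (x, s) - B (x, t) + γ s * w x - Th c η θ s t ∧
      (-(2 * c * (t - s) + η) + deriv θ s - deriv γ s * w x - deriv α s * A (x, s))
        + α s * H x p ≤ α s * f (x, s) ∧
      g (x, t) ≤ -(2 * c * (t - s) + η) + H x (α s • p + γ s • q) ∧
      (γ s = 0 ∨ H x q ≤ 0) := by
  have cα := hα.continuous
  have cγ := hγ.continuous
  have cθ := hθ.continuous
  have cα' : Continuous (deriv α) := hα.continuous_deriv le_rfl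
  have cγ' : Continuous (deriv γ) := hγ.continuous_deriv le_rfl
  have cθ' : Continuous (deriv θ) := hθ.continuous_deriv le_rfl
  -- periodicity of FF
  have hper : ∀ k y a b s t (v : Fin n → ℤ), FF A B w α γ θ c η k (y + intVec n v) a b s t
      = FF A B w α γ θ c η k y a b s t := by
    intro k y a b s t v
    simp only [FF]
    rw [add_right_comm y _ a, add_right_comm y _ b, pA, pB, pw]
  have hcF : ∀ k, Continuous (fun q : En n × En n × En n × ℝ × ℝ =>
      FF A B w α γ θ c η k q.1 q.2.1 q.2.2.1 q.2.2.2.1 q.2.2.2.2) := by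
    intro k; simp only [FF, Th]; fun_prop
  set D : Set (En n × En n × En n × ℝ × ℝ) :=
    Metric.closedBall 0 (√n) ×ˢ Metric.closedBall 0 1 ×ˢ Metric.closedBall 0 1 ×ˢ K with hD
  have hDc : IsCompact D := (isCompact_closedBall _ _).prod ((isCompact_closedBall _ _).prod
    ((isCompact_closedBall _ _).prod hK))
  obtain ⟨x1, s1, t1, hK1, hm1⟩ := hm1
  obtain ⟨v1, hv1⟩ := exists_intVec n x1
  have hmem1 : ((x1 + intVec n v1, 0, 0, s1, t1) : En n × En n × En n × ℝ × ℝ) ∈ D := by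
    simp [hD, hv1, hK1]
  have hval1 : ∀ k, m1 ≤ FF A B w α γ θ c η k (x1 + intVec n v1) 0 0 s1 t1 := by
    intro k; rw [hper]; simpa [FF] using hm1
  have hex : ∀ k : ℕ, ∃ q ∈ D, IsMaxOn (fun q : En n × En n × En n × ℝ × ℝ =>
      FF A B w α γ θ c η k q.1 q.2.1 q.2.2.1 q.2.2.2.1 q.2.2.2.2) D q := fun k =>
    hDc.exists_isMaxOn ⟨_, hmem1⟩ (hcF k).continuousOn
  choose Z hZD hZmax using hex
  obtain ⟨z, hzD, hz⟩ := UF_lim hDc Z (Eventually.of_forall hZD)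
  -- split
  set Y := fun k => (Z k).1
  set a := fun k => (Z k).2.1
  set b := fun k => (Z k).2.2.1
  set S := fun k => (Z k).2.2.2.1
  set T := fun k => (Z k).2.2.2.2
  have hY : Tendsto Y UF (𝓝 z.1) := (continuous_fst.tendsto z).comp hz
  have ha : Tendsto a UF (𝓝 z.2.1) :=
    ((by fun_prop : Continuous fun q : En n × En n × En n × ℝ × ℝ => q.2.1).tendsto z).comp hz
  have hb : Tendsto b UF (𝓝 z.2.2.1) :=
    ((by fun_prop : Continuous fun q : En n × En n × En n × ℝ × ℝ => q.2.2.1).tendsto z).comp hz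
  have hS : Tendsto S UF (𝓝 z.2.2.2.1) :=
    ((by fun_prop : Continuous fun q : En n × En n × En n × ℝ × ℝ => q.2.2.2.1).tendsto z).comp hz
  have hT : Tendsto T UF (𝓝 z.2.2.2.2) :=
    ((by fun_prop : Continuous fun q : En n × En n × En n × ℝ × ℝ => q.2.2.2.2).tendsto z).comp hz
  have hglob : ∀ k : ℕ, ∀ y' a' b' s' t', ‖a'‖ ≤ 1 → ‖b'‖ ≤ 1 → (s', t') ∈ K →
      FF A B w α γ θ c η k y' a' b' s' t' ≤ FF A B w α γ θ c η k (Y k) (a k) (b k) (S k) (T k) := by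
    intro k y' a' b' s' t' h1 h2 h3
    obtain ⟨v, hv⟩ := exists_intVec n y'
    rw [← hper _ _ _ _ _ _ v]
    exact hZmax k (show ((y' + intVec n v, a', b', s', t') : En n × En n × En n × ℝ × ℝ) ∈ D by
      simp [hD, hv, h1, h2, h3])
  have hval : ∀ k : ℕ, m1 ≤ FF A B w α γ θ c η k (Y k) (a k) (b k) (S k) (T k) := fun k =>
    (hval1 k).trans (hZmax k hmem1)
  have hFk : ∀ k : ℕ, FF A B w α γ θ c η k (Y k) (a k) (b k) (S k) (T k) =
    FF A B w α γ θ c η 0 (Y k) (a k) (b k) (S k) (T k) - k * (‖a k‖ ^ 2 + ‖b k‖ ^ 2) := by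
    intro k; simp only [FF]; ring
  have hF0 : Tendsto (fun k => FF A B w α γ θ c η 0 (Y k) (a k) (b k) (S k) (T k)) UF
      (𝓝 (FF A B w α γ θ c η 0 z.1 z.2.1 z.2.2.1 z.2.2.2.1 z.2.2.2.2)) :=
    ((hcF 0).tendsto z).comp hz
  have hnn : ∀ k : ℕ, 0 ≤ (k : ℝ) * (‖a k‖ ^ 2 + ‖b k‖ ^ 2) := fun k => by positivity
  set L := FF A B w α γ θ c η 0 z.1 z.2.1 z.2.2.1 z.2.2.2.1 z.2.2.2.2 with hL
  have hLm : m1 ≤ L := ge_of_tendsto hF0 (Eventually.of_forall fun k => by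
    have := hval k; rw [hFk] at this; linarith [hnn k])
  have hzero : Tendsto (fun k => ‖a k‖ ^ 2 + ‖b k‖ ^ 2) UF (𝓝 0) := by
    have hb1 : ∀ᶠ k in UF, ‖a k‖ ^ 2 + ‖b k‖ ^ 2 ≤ (L + 1 - m1) / (k : ℝ) := by
      have h1 := hF0.eventually (gt_mem_nhds (show L < L + 1 by linarith))
      have h2 : ∀ᶠ k : ℕ in UF, 0 < k := UF_le (eventually_gt_atTop 0)
      filter_upwards [h1, h2] with k h1 h2
      have h2' : (0 : ℝ) < k := by exact_mod_cast h2
      rw [le_div_iff₀ h2']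
      have := hval k; rw [hFk] at this; linarith
    refine tendsto_of_tendsto_of_tendsto_of_le_of_le' tendsto_const_nhds
      ((tendsto_const_div_atTop_nhds_zero_nat (L + 1 - m1)).mono_left UF_le)
      (Eventually.of_forall fun k => by positivity) hb1
  have hab : ‖z.2.1‖ ^ 2 + ‖z.2.2.1‖ ^ 2 = 0 :=
    tendsto_nhds_unique ((ha.norm.pow 2).add (hb.norm.pow 2)) hzero
  have ha0 : z.2.1 = 0 := by
    have : ‖z.2.1‖ = 0 := by nlinarith [sq_nonneg ‖z.2.1‖, sq_nonneg ‖z.2.2.1‖]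
    simpa using this
  have hb0 : z.2.2.1 = 0 := by
    have : ‖z.2.2.1‖ = 0 := by nlinarith [sq_nonneg ‖z.2.1‖, sq_nonneg ‖z.2.2.1‖]
    simpa using this
  rw [ha0] at ha
  rw [hb0] at hb
  set x := z.1
  set s := z.2.2.2.1
  set t := z.2.2.2.2
  have hLval : L = α s * A (x, s) - B (x, t) + γ s * w x - Th c η θ s t := by
    rw [hL, ha0, hb0]; simp [FF]
  rw [hLval] at hLm
  have hxn : ‖x‖ ≤ √n := by simpa using hzD.1
  have hstK : (s, t) ∈ K := hzD.2.2.2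
  have hstO : (s, t) ∈ O := by
    by_contra hno
    exact absurd (hbd x s t hstK hno) (not_lt.mpr hLm)
  have hST : Tendsto (fun k => (S k, T k)) UF (𝓝 (s, t)) := hS.prodMk_nhds hT
  have evO : ∀ᶠ k in UF, (S k, T k) ∈ O := hST.eventually (hO.mem_nhds hstO)
  have eva : ∀ᶠ k in UF, ‖a k‖ < 1 := ha.norm.eventually (gt_mem_nhds (by simp))
  have evb : ∀ᶠ k in UF, ‖b k‖ < 1 := hb.norm.eventually (gt_mem_nhds (by simp))
  have evk : ∀ᶠ k : ℕ in UF, 0 < k := UF_le (eventually_gt_atTop 0)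
  set P := fun k : ℕ => (α (S k))⁻¹ • ((2 * (k : ℝ)) • a k) with hP
  set Q := fun k : ℕ => (γ (S k))⁻¹ • ((2 * (k : ℝ)) • b k) with hQ
  have evA : ∀ᶠ k in UF, (-(2 * c * (T k - S k) + η) + deriv θ (S k)
      - deriv γ (S k) * w (Y k + b k) - deriv α (S k) * A (Y k + a k, S k))
      + α (S k) * H (Y k + a k) (P k) ≤ α (S k) * f (Y k + a k, S k) := by
    filter_upwards [evO, eva, evb] with k h1 h2 h3
    exact visc_A hA hα hγ hθ hα0 hO hOK (hOp _ _ h1).1 h1 h2 h3 (hglob k)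
  have evW : ∀ᶠ k in UF, (γ (S k) = 0 ∧ b k = 0) ∨
      (0 < γ (S k) ∧ H (Y k + b k) (Q k) ≤ 0) := by
    filter_upwards [evO, eva, evb, evk] with k h1 h2 h3 h4
    exact visc_w hw (hγ0 _) (hOK h1) h2 h3 (by exact_mod_cast h4) (hglob k)
  have evB : ∀ᶠ k in UF, g (Y k, T k) ≤ -(2 * c * (T k - S k) + η)
      + H (Y k) (α (S k) • P k + γ (S k) • Q k) := by
    filter_upwards [evO, eva, evb, evW] with k h1 h2 h3 h4
    have := visc_B hB hO hOK (hOp _ _ h1).2 h1 h2 h3 (hglob k)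
    have e1 : α (S k) • P k = (2 * (k : ℝ)) • a k := by
      simp only [hP]; rw [smul_inv_smul₀ (hα0 _).ne']
    have e2 : γ (S k) • Q k = (2 * (k : ℝ)) • b k := by
      simp only [hQ]
      rcases h4 with ⟨h5, h6⟩ | ⟨h5, h6⟩
      · rw [h6]; simp
      · rw [smul_inv_smul₀ h5.ne']
    rw [e1, e2]; exact this
  have hYa : Tendsto (fun k => Y k + a k) UF (𝓝 x) := by simpa using hY.add ha
  have hYb : Tendsto (fun k => Y k + b k) UF (𝓝 x) := by simpa using hY.add hb
  have hαS : Tendsto (fun k => α (S k)) UF (𝓝 (α s)) := (cα.tendsto s).comp hS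
  have hγS : Tendsto (fun k => γ (S k)) UF (𝓝 (γ s)) := (cγ.tendsto s).comp hS
  have hfl : Tendsto (fun k => f (Y k + a k, S k)) UF (𝓝 (f (x, s))) :=
    (cf.tendsto (x, s)).comp (hYa.prodMk_nhds hS)
  have hgl : Tendsto (fun k => g (Y k, T k)) UF (𝓝 (g (x, t))) :=
    (cg.tendsto (x, t)).comp (hY.prodMk_nhds hT)
  have hcl : Tendsto (fun k => -(2 * c * (T k - S k) + η)) UF (𝓝 (-(2 * c * (t - s) + η))) :=
    (((hT.sub hS).const_mul (2 * c)).add_const η).neg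
  have hGl : Tendsto (fun k => -(2 * c * (T k - S k) + η) + deriv θ (S k)
      - deriv γ (S k) * w (Y k + b k) - deriv α (S k) * A (Y k + a k, S k)) UF
      (𝓝 (-(2 * c * (t - s) + η) + deriv θ s - deriv γ s * w x - deriv α s * A (x, s))) := by
    refine ((hcl.add ((cθ'.tendsto s).comp hS)).sub
      (((cγ'.tendsto s).comp hS).mul ((cw.tendsto x).comp hYb))).sub
      (((cα'.tendsto s).comp hS).mul ?_)
    exact (cA.tendsto (x, s)).comp (hYa.prodMk_nhds hS)
  -- bounds on P
  obtain ⟨R1, hR1⟩ : ∃ R1 : ℝ, ∀ᶠ k in UF, ‖P k‖ ≤ R1 := by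
    have hlim := (((hαS.mul hfl).sub hGl).div hαS (hα0 s).ne')
    set M := (α s * f (x, s) - (-(2 * c * (t - s) + η) + deriv θ s - deriv γ s * w x
      - deriv α s * A (x, s))) / α s
    have ev := hlim.eventually (gt_mem_nhds (show M < M + 1 by linarith))
    obtain ⟨r, hr⟩ := hcoer (M + 1)
    refine ⟨r, ?_⟩
    filter_upwards [ev, evA] with k h1 h2
    by_contra hc
    have h3 := hr (Y k + a k) (P k) (not_le.mp hc).le
    have h4 := hα0 (S k)
    simp only [Pi.div_apply] at h1
    rw [div_lt_iff₀ h4] at h1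
    nlinarith [mul_le_mul_of_nonneg_left h3 h4.le]
  obtain ⟨R2, hR2⟩ : ∃ R2 : ℝ, ∀ᶠ k in UF, ‖Q k‖ ≤ R2 := by
    obtain ⟨r, hr⟩ := hcoer 1
    refine ⟨max r 0, ?_⟩
    filter_upwards [evW] with k h1
    rcases h1 with ⟨h2, h3⟩ | ⟨h2, h3⟩
    · simp [hQ, h3]
    · by_contra hc
      have := hr (Y k + b k) (Q k) ((le_max_left _ _).trans (not_le.mp hc).le)
      linarith
  obtain ⟨p, -, hp⟩ := UF_lim (isCompact_closedBall (0 : En n) R1) P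
    (hR1.mono fun k hk => by simpa using hk)
  obtain ⟨q, -, hq⟩ := UF_lim (isCompact_closedBall (0 : En n) R2) Q
    (hR2.mono fun k hk => by simpa using hk)
  have hH : ∀ {y' p' : ℕ → En n} {y₀ p₀ : En n}, Tendsto y' UF (𝓝 y₀) → Tendsto p' UF (𝓝 p₀) →
      Tendsto (fun k => H (y' k) (p' k)) UF (𝓝 (H y₀ p₀)) := by
    intro y' p' y₀ p₀ h1 h2
    exact (hHc.tendsto (y₀, p₀)).comp (h1.prodMk_nhds h2)
  refine ⟨x, s, t, p, q, hxn, hstO, hLm, ?_, ?_, ?_⟩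
  · exact le_of_tendsto_of_tendsto (hGl.add (hαS.mul (hH hYa hp))) (hαS.mul hfl) evA
  · exact le_of_tendsto_of_tendsto hgl
      (hcl.add (hH hY ((hαS.smul hp).add (hγS.smul hq)))) evB
  · rcases (hγ0 s).eq_or_lt with h0 | h0
    · exact Or.inl h0.symm
    · right
      refine le_of_tendsto (hH hYb hq) ?_
      filter_upwards [evW, hγS.eventually (lt_mem_nhds h0)] with k h1 h2
      rcases h1 with ⟨h3, _⟩ | ⟨_, h3⟩
      · exact absurd h3 h2.ne'
      · exact h3

open MeasureTheory Filter Topology Set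

lemma bounded_of_periodic {n : ℕ} {A : En n × ℝ → ℝ} (cA : Continuous A) (pA : ZPeriodicST A)
    (T : ℝ) : ∃ M : ℝ, ∀ x t, 0 ≤ t → t ≤ T → |A (x, t)| ≤ M := by
  have hc : IsCompact ((Metric.closedBall (0 : En n) (√n)) ×ˢ (Icc 0 T)) :=
    (isCompact_closedBall _ _).prod isCompact_Icc
  obtain ⟨M, hM⟩ := hc.exists_bound_of_continuousOn cA.continuousOn
  refine ⟨M, fun x t h0 h1 => ?_⟩
  obtain ⟨v, hv⟩ := exists_intVec n x
  rw [← pA x v t]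
  exact hM (x + intVec n v, t) ⟨by simpa using hv, h0, h1⟩

theorem comparison {n : ℕ} {H : En n → En n → ℝ}
    (hHc : Continuous fun q : En n × En n => H q.1 q.2)
    (hcoer : Coercive H) {A B f g : En n × ℝ → ℝ} {w : En n → ℝ} {θ : ℝ → ℝ}
    (cA : Continuous A) (cB : Continuous B) (cf : Continuous f)
    (cg : Continuous g) (cw : Continuous w) (pA : ZPeriodicST A) (pB : ZPeriodicST B)
    (pw : ZPeriodic w) (hA : SubF H A f) (hB : SuperF H B g) (hw : SingleSub H w 0)
    (hθ : ContDiff ℝ 1 θ) (h0 : ∀ x, A (x, 0) - B (x, 0) ≤ θ 0)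
    (hstep : ∀ x t, 0 < t → θ t < A (x, t) - B (x, t) → f (x, t) - g (x, t) ≤ deriv θ t) :
    ∀ x t, 0 ≤ t → A (x, t) - B (x, t) ≤ θ t := by
  intro x1 t1 ht1
  by_contra hlt
  push Not at hlt
  set d := A (x1, t1) - B (x1, t1) - θ t1 with hd
  have hdpos : 0 < d := by rw [hd]; linarith
  set σ := d / 2 with hσ
  have hσpos : 0 < σ := by positivity
  set T := t1 + 1 with hT
  obtain ⟨M, hM⟩ := bounded_of_periodic (A := fun q => A q - B q - θ q.2)
    ((cA.sub cB).sub (hθ.continuous.comp continuous_snd))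
    (fun x k t => by simp only [pA x k t, pB x k t]) T
  have hMd : d ≤ M := (le_abs_self _).trans (hM x1 t1 ht1 (by linarith))
  set N := M / σ with hN
  have hNpos : 0 < N := by have : 0 < M := by linarith
                           positivity
  set θ' := fun t => θ t + σ * Real.exp (N * (t - t1)) with hθ'
  have hθ'c : ContDiff ℝ 1 θ' := by fun_prop
  have dθ' : ∀ t, deriv θ' t = deriv θ t + σ * (Real.exp (N * (t - t1)) * N) := by
    intro t
    have e1 : HasDerivAt θ (deriv θ t) t := (hθ.differentiable one_ne_zero t).hasDerivAt
    have e2 : HasDerivAt (fun t => N * (t - t1)) N t := by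
      simpa using ((hasDerivAt_id t).sub_const t1).const_mul N
    exact (e1.add (e2.exp.const_mul σ)).deriv
  set K : Set (ℝ × ℝ) := Icc 0 T ×ˢ Icc 0 T with hK
  set O : Set (ℝ × ℝ) := Ioo 0 T ×ˢ Ioo 0 T with hO
  have hOo : IsOpen O := isOpen_Ioo.prod isOpen_Ioo
  have claim : ∀ k : ℕ, ∃ q : En n × ℝ × ℝ, q ∈ Metric.closedBall (0 : En n) (√n) ×ˢ K ∧
      σ ≤ A (q.1, q.2.1) - B (q.1, q.2.2) - k * (q.2.2 - q.2.1) ^ 2 - θ' q.2.1 ∧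
      (deriv θ' q.2.1 ≤ f (q.1, q.2.1) - g (q.1, q.2.2) ∨ q.2 ∉ O) := by
    intro k
    by_cases hbd : ∀ x s t, (s, t) ∈ K → (s, t) ∉ O →
      1 * A (x, s) - B (x, t) + 0 * w x - Th k 0 θ' s t < σ
    · obtain ⟨x, s, t, p, q, hx, hst, hm, h1, h2, -⟩ := master hHc hcoer (α := fun _ => 1)
        (γ := fun _ => 0) cA cB cf cg cw pA pB pw hA hB hw contDiff_const contDiff_const hθ'c
        (fun _ => one_pos) (fun _ => le_rfl) (isCompact_Icc.prod isCompact_Icc) hOo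
        (prod_mono Ioo_subset_Icc_self Ioo_subset_Icc_self)
        (fun s t h => ⟨h.1.1, h.2.1⟩) (m1 := σ) (c := k) (η := 0) (θ := θ') (by
          refine ⟨x1, t1, t1, ⟨⟨ht1, by linarith⟩, ⟨ht1, by linarith⟩⟩, ?_⟩
          simp [Th, hθ']; linarith) hbd
      refine ⟨(x, s, t), ⟨by simpa using hx, prod_mono Ioo_subset_Icc_self Ioo_subset_Icc_self hst⟩,
        ?_, Or.inl ?_⟩
      · simp [Th] at hm; simp only; linarith
      · simp at h1 h2; simp only; linarith
    · push Not at hbd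
      obtain ⟨x, s, t, hst, hno, hm⟩ := hbd
      obtain ⟨v, hv⟩ := exists_intVec n x
      refine ⟨(x + intVec n v, s, t), ⟨by simpa using hv, hst⟩, ?_, Or.inr hno⟩
      simp only [pA x v, pB x v]
      simp [Th] at hm
      linarith
  choose Z hZD hZ1 hZ2 using claim
  have hcomp : IsCompact (Metric.closedBall (0 : En n) (√n) ×ˢ K) :=
    (isCompact_closedBall _ _).prod (isCompact_Icc.prod isCompact_Icc)
  obtain ⟨z, hzD, hz⟩ := UF_lim hcomp Z (Eventually.of_forall hZD)
  obtain ⟨x, s, t⟩ := z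
  have lim : ∀ F : En n × ℝ × ℝ → ℝ, Continuous F →
      Tendsto (fun k => F (Z k)) UF (𝓝 (F (x, s, t))) := fun F hF => (hF.tendsto _).comp hz
  have cθ' := hθ'c.continuous
  have cdθ' := hθ'c.continuous_deriv le_rfl
  have l1 := lim (fun q => A (q.1, q.2.1) - B (q.1, q.2.2) - θ' q.2.1) (by fun_prop)
  have l2 := lim (fun q => (q.2.2 - q.2.1) ^ 2) (by fun_prop)
  have l3 := lim (fun q => deriv θ' q.2.1) (by fun_prop)
  have l4 := lim (fun q => f (q.1, q.2.1) - g (q.1, q.2.2)) (by fun_prop)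
  simp only at l1 l2 l3 l4
  set L := A (x, s) - B (x, t) - θ' s with hL
  have hst : (t - s) ^ 2 = 0 := by
    refine tendsto_nhds_unique l2 ?_
    refine tendsto_of_tendsto_of_tendsto_of_le_of_le' tendsto_const_nhds
      ((tendsto_const_div_atTop_nhds_zero_nat (L + 1 - σ)).mono_left UF_le)
      (Eventually.of_forall fun k => by positivity) ?_
    have h2 : ∀ᶠ k : ℕ in UF, 0 < k := UF_le (eventually_gt_atTop 0)
    filter_upwards [l1.eventually (gt_mem_nhds (show L < L + 1 by linarith)), h2] with k h1 h2
    have h2' : (0 : ℝ) < k := by exact_mod_cast h2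
    rw [le_div_iff₀ h2']
    linarith [hZ1 k]
  have hts : t = s := by
    have := pow_eq_zero_iff (two_ne_zero) |>.mp hst
    linarith
  subst hts
  have hLσ : σ ≤ L := ge_of_tendsto l1 (Eventually.of_forall fun k => by
    have : (0 : ℝ) ≤ k * ((Z k).2.2 - (Z k).2.1) ^ 2 := by positivity
    linarith [hZ1 k])
  have ht0 : 0 ≤ t := hzD.2.1.1
  have htT : t ≤ T := hzD.2.1.2
  have hexp : ∀ τ, 0 < σ * Real.exp (N * (τ - t1)) := fun τ => by positivity
  have hne0 : t ≠ 0 := by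
    rintro rfl
    have := h0 x
    have := hexp 0
    simp only [hL, hθ'] at hLσ
    linarith
  have hneT : t ≠ T := by
    rintro rfl
    have h1 := (le_abs_self _).trans (hM x T ht0 le_rfl)
    have h2 := Real.add_one_le_exp (N * (T - t1))
    have h3 : σ * N = M := by rw [hN]; field_simp
    have h4 : N * (T - t1) = N := by rw [hT]; ring
    rw [h4] at h2
    simp only [hL, hθ', h4] at hLσ h1
    nlinarith [mul_le_mul_of_nonneg_left h2 hσpos.le]
  have htpos : 0 < t := lt_of_le_of_ne ht0 (Ne.symm hne0)
  have htT' : t < T := lt_of_le_of_ne htT hneT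
  have hin : ∀ᶠ k in UF, (Z k).2 ∈ O := by
    have : Tendsto (fun k => (Z k).2) UF (𝓝 (t, t)) := (continuous_snd.tendsto _).comp hz
    exact this.eventually (hOo.mem_nhds ⟨⟨htpos, htT'⟩, ⟨htpos, htT'⟩⟩)
  have hfin : deriv θ' t ≤ f (x, t) - g (x, t) := by
    refine le_of_tendsto_of_tendsto l3 l4 ?_
    filter_upwards [hin] with k hk
    rcases hZ2 k with h | h
    · exact h
    · exact absurd hk h
  have h5 := hstep x t htpos (by
    have := hexp t
    simp only [hL, hθ'] at hLσ
    linarith)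
  rw [dθ'] at hfin
  have : 0 < σ * (Real.exp (N * (t - t1)) * N) := by positivity
  linarith

open MeasureTheory Filter Topology Set

lemma compare_exp {n : ℕ} {H : En n → En n → ℝ}
    (hHc : Continuous fun q : En n × En n => H q.1 q.2)
    (hcoer : Coercive H) {A B : En n × ℝ → ℝ} {w : En n → ℝ} {a b d : ℝ}
    (cA : Continuous A) (cB : Continuous B) (cw : Continuous w)
    (pA : ZPeriodicST A) (pB : ZPeriodicST B) (pw : ZPeriodic w)
    (hA : SubF H A (fun q => a * Real.exp (-2 * q.2)))
    (hB : SuperF H B (fun q => -(b * Real.exp (-2 * q.2)))) (hw : SingleSub H w 0)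
    (hab : 0 ≤ a + b) (h0 : ∀ x, A (x, 0) - B (x, 0) ≤ d) :
    ∀ x t, 0 ≤ t → A (x, t) - B (x, t) ≤ d + (a + b) / 2 := by
  intro x t ht
  have dθ : ∀ t, HasDerivAt (fun t => d + (a + b) / 2 * (1 - Real.exp (-2 * t)))
      ((a + b) * Real.exp (-2 * t)) t := by
    intro t
    have e2 : HasDerivAt (fun t : ℝ => -2 * t) (-2) t := by
      simpa using (hasDerivAt_id t).const_mul (-2)
    have := ((e2.exp.const_sub 1).const_mul ((a + b) / 2)).const_add d
    exact this.congr_deriv (by ring)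
  have := comparison hHc hcoer cA cB (by fun_prop) (by fun_prop) cw pA pB pw hA hB hw
    (θ := fun t => d + (a + b) / 2 * (1 - Real.exp (-2 * t))) (by fun_prop) (by simpa using h0)
    (by intro x t ht _; rw [(dθ t).deriv]; simp only; linarith) x t ht
  have h1 : 0 < Real.exp (-2 * t) := Real.exp_pos _
  nlinarith

lemma decay {n : ℕ} {H : En n → En n → ℝ}
    (hHc : Continuous fun q : En n × En n => H q.1 q.2)
    (hcoer : Coercive H) {A B : En n × ℝ → ℝ} {w : En n → ℝ} {C : ℝ}
    (cA : Continuous A) (cB : Continuous B) (cw : Continuous w)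
    (pA : ZPeriodicST A) (pB : ZPeriodicST B) (pw : ZPeriodic w)
    (hA : SubF H A (fun q => B q - A q))
    (hB : SuperF H B (fun q => A q - B q)) (hw : SingleSub H w 0)
    (h0 : ∀ x, A (x, 0) - B (x, 0) ≤ C) :
    ∀ x t, 0 ≤ t → A (x, t) - B (x, t) ≤ C * Real.exp (-2 * t) := by
  have dθ : ∀ t, HasDerivAt (fun t => C * Real.exp (-2 * t))
      (-2 * (C * Real.exp (-2 * t))) t := by
    intro t
    have e2 : HasDerivAt (fun t : ℝ => -2 * t) (-2) t := by
      simpa using (hasDerivAt_id t).const_mul (-2)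
    have := (e2.exp.const_mul C)
    exact this.congr_deriv (by ring)
  exact comparison hHc hcoer cA cB (by fun_prop) (by fun_prop) cw pA pB pw hA hB hw
    (θ := fun t => C * Real.exp (-2 * t)) (by fun_prop) (by simpa using h0)
    (by intro x t ht h; rw [(dθ t).deriv]; linarith)

/-- Standing assumptions on the single function. -/
structure Good {n : ℕ} (H : En n → En n → ℝ) (w : En n → ℝ) (u : En n × ℝ → ℝ) (C : ℝ) : Prop where
  hHc : Continuous fun q : En n × En n => H q.1 q.2
  hcoer : Coercive H
  cu : Continuous u
  pu : ZPeriodicST u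
  cw : Continuous w
  pw : ZPeriodic w
  hC : 0 ≤ C
  hsub : SubF H u (fun q => C * Real.exp (-2 * q.2))
  hsup : SuperF H u (fun q => -(C * Real.exp (-2 * q.2)))
  hw : SingleSub H w 0
  hw' : SingleSuper H w 0

lemma bounded_of_periodic' {n : ℕ} {w : En n → ℝ} (cw : Continuous w) (pw : ZPeriodic w) :
    ∃ M : ℝ, ∀ x, |w x| ≤ M := by
  obtain ⟨M, hM⟩ := bounded_of_periodic (A := fun q => w q.1) (by fun_prop)
    (fun x k t => pw x k) 0
  exact ⟨M, fun x => hM x 0 le_rfl le_rfl⟩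

lemma Good.bdd {n : ℕ} {H : En n → En n → ℝ} {w : En n → ℝ} {u : En n × ℝ → ℝ} {C : ℝ}
    (g : Good H w u C) : ∃ M, ∀ x t, 0 ≤ t → |u (x, t)| ≤ M := by
  obtain ⟨m, hm⟩ := bounded_of_periodic' g.cw g.pw
  obtain ⟨m', hm'⟩ := bounded_of_periodic g.cu g.pu 0
  have h1 := compare_exp (d := m + m') (a := C) (b := 0) (B := fun q => w q.1) g.hHc g.hcoer g.cu
    (g.cw.comp continuous_fst) g.cw g.pu (fun x k t => g.pw x k) g.pw g.hsub
    (g.hw'.evol.mono (by simp)) g.hw (by linarith [g.hC])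
    (fun x => by
      have := abs_le.1 (hm x); have := abs_le.1 (hm' x 0 le_rfl le_rfl); simp only; linarith)
  have h2 := compare_exp (d := m + m') (a := 0) (b := C) (A := fun q => w q.1) g.hHc g.hcoer
    (g.cw.comp continuous_fst) g.cu g.cw (fun x k t => g.pw x k) g.pu g.pw
    (g.hw.evol.mono (by simp)) g.hsup g.hw (by linarith [g.hC])
    (fun x => by
      have := abs_le.1 (hm x); have := abs_le.1 (hm' x 0 le_rfl le_rfl); simp only; linarith)
  refine ⟨m + m + m' + C / 2, fun x t ht => ?_⟩
  have := h1 x t ht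
  have := h2 x t ht
  have := abs_le.1 (hm x)
  simp only at *
  rw [abs_le]; constructor <;> linarith

lemma exp_shift (C s t : ℝ) : C * Real.exp (-2 * (t + s)) = C * Real.exp (-2 * s) * Real.exp (-2 * t) := by
  rw [mul_assoc, ← Real.exp_add]; ring_nf

lemma Good.contr {n : ℕ} {H : En n → En n → ℝ} {w : En n → ℝ} {u : En n × ℝ → ℝ} {C : ℝ}
    (g : Good H w u C) {S s1 s2 d : ℝ} (hS : 0 ≤ S) (h1 : S ≤ s1) (h2 : S ≤ s2)
    (h : ∀ x, u (x, s1) - u (x, s2) ≤ d) :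
    ∀ x t, 0 ≤ t → u (x, s1 + t) - u (x, s2 + t) ≤ d + C * Real.exp (-2 * S) := by
  intro x t ht
  have hC := g.hC
  have cu := g.cu
  have k := compare_exp (d := d) (a := C * Real.exp (-2 * s1)) (b := C * Real.exp (-2 * s2))
    (A := fun q => u (q.1, q.2 + s1)) (B := fun q => u (q.1, q.2 + s2))
    g.hHc g.hcoer (by fun_prop) (by fun_prop) g.cw (fun x k t => g.pu x k _)
    (fun x k t => g.pu x k _) g.pw
    ((g.hsub.shift s1 (hS.trans h1)).mono (fun x t _ => by simp only; rw [exp_shift]))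
    ((g.hsup.shift s2 (hS.trans h2)).mono (fun x t _ => by simp only; rw [exp_shift])) g.hw
    (by positivity) (by simpa using h) x t ht
  have e1 : Real.exp (-2 * s1) ≤ Real.exp (-2 * S) := Real.exp_le_exp.2 (by linarith)
  have e2 : Real.exp (-2 * s2) ≤ Real.exp (-2 * S) := Real.exp_le_exp.2 (by linarith)
  have := mul_le_mul_of_nonneg_left e1 hC
  have := mul_le_mul_of_nonneg_left e2 hC
  simp only at k
  rw [add_comm s1, add_comm s2]
  linarith

lemma exp_small (C : ℝ) {ε : ℝ} (hε : 0 < ε) : ∃ S : ℝ, 0 ≤ S ∧ ∀ s, S ≤ s → C * Real.exp (-2 * s) ≤ ε := by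
  have : Tendsto (fun s : ℝ => C * Real.exp (-2 * s)) atTop (𝓝 (C * 0)) := by
    refine Tendsto.const_mul _ (Real.tendsto_exp_atBot.comp ?_)
    exact tendsto_id.const_mul_atTop_of_neg (by norm_num)
  rw [mul_zero] at this
  obtain ⟨S, hS⟩ := eventually_atTop.1 (this.eventually (ge_mem_nhds hε))
  exact ⟨max S 0, le_max_right _ _, fun s hs => hS s ((le_max_left _ _).trans hs)⟩

/-- asymptotic equicontinuity in time -/
lemma Good.timeEq {n : ℕ} {H : En n → En n → ℝ} {w : En n → ℝ} {u : En n × ℝ → ℝ} {C : ℝ}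
    (g : Good H w u C) {ε : ℝ} (hε : 0 < ε) : ∃ δ S : ℝ, 0 < δ ∧ 0 ≤ S ∧ ∀ x s t, S ≤ s → S ≤ t →
      |t - s| ≤ δ → u (x, t) - u (x, s) ≤ ε := by
  obtain ⟨S, hS0, hS⟩ := exp_small C (half_pos hε)
  have hc : IsCompact (Metric.closedBall (0 : En n) (√n) ×ˢ Icc S (S + 1)) :=
    (isCompact_closedBall _ _).prod isCompact_Icc
  have hu := hc.uniformContinuousOn_of_continuous g.cu.continuousOn
  rw [Metric.uniformContinuousOn_iff_le] at hu
  obtain ⟨δ, hδ, hu⟩ := hu (ε / 2) (half_pos hε)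
  have key : ∀ x s t, S ≤ s → s ≤ S + 1 → S ≤ t → t ≤ S + 1 → |t - s| ≤ δ →
      u (x, t) - u (x, s) ≤ ε / 2 := by
    intro x s t h1 h2 h3 h4 h5
    obtain ⟨v, hv⟩ := exists_intVec n x
    rw [← g.pu x v t, ← g.pu x v s]
    have := hu (x + intVec n v, t) ⟨by simpa using hv, h3, h4⟩ (x + intVec n v, s)
      ⟨by simpa using hv, h1, h2⟩ (by
        rw [Prod.dist_eq, dist_self, Real.dist_eq]; exact max_le hδ.le h5)
    rw [Real.dist_eq] at this
    exact (le_abs_self _).trans this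
  refine ⟨min δ 1, S, lt_min hδ one_pos, hS0, fun x s t hs ht hst => ?_⟩
  have h1 := hst.trans (min_le_left _ _)
  have h2 := hst.trans (min_le_right _ _)
  have h2' := abs_le.1 h2
  rcases le_total s t with hle | hle
  · have := g.contr (S := S) (s1 := S + (t - s)) (s2 := S) (d := ε / 2) hS0 (by linarith) le_rfl
      (fun x => key x S (S + (t - s)) le_rfl (by linarith) (by linarith) (by linarith)
        (by simpa using h1)) x (s - S) (by linarith)
    have e1 : S + (t - s) + (s - S) = t := by ring
    have e2 : S + (s - S) = s := by ring
    rw [e1, e2] at this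
    linarith [hS S le_rfl]
  · have := g.contr (S := S) (s1 := S) (s2 := S + (s - t)) (d := ε / 2) hS0 le_rfl (by linarith)
      (fun x => key x (S + (s - t)) S (by linarith) (by linarith) le_rfl (by linarith)
        (by rw [show S - (S + (s - t)) = t - s by ring]; exact h1)) x (t - S) (by linarith)
    have e1 : S + (s - t) + (t - S) = s := by ring
    have e2 : S + (t - S) = t := by ring
    rw [e1, e2] at this
    linarith [hS S le_rfl]

open MeasureTheory Filter Topology Set

lemma hasGradientAt_cone {n : ℕ} {L τ : ℝ} (hτ : 0 < τ) (y x : En n) :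
    HasGradientAt (fun x => L * √(τ ^ 2 + ‖x - y‖ ^ 2))
      ((L / √(τ ^ 2 + ‖x - y‖ ^ 2)) • (x - y)) x := by
  have hpos : τ ^ 2 + ‖x - y‖ ^ 2 ≠ 0 := by positivity
  rw [hasGradientAt_iff_hasFDerivAt]
  have h : HasFDerivAt (fun x : En n => L * √(τ ^ 2 + ‖x - y‖ ^ 2)) _ x :=
    (((((hasFDerivAt_id x).sub_const y).norm_sq).const_add (τ ^ 2)).sqrt hpos).const_mul L
  refine h.congr_fderiv ?_
  ext v
  simp
  have : √(τ ^ 2 + ‖x - y‖ ^ 2) ≠ 0 := by positivity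
  field_simp

lemma contDiff_cone {n : ℕ} {L τ : ℝ} (hτ : 0 < τ) (y : En n) :
    ContDiff ℝ 1 (fun x : En n => L * √(τ ^ 2 + ‖x - y‖ ^ 2)) := by
  refine contDiff_const.mul (ContDiff.sqrt ?_ fun x => by positivity)
  exact contDiff_const.add ((contDiff_id.sub contDiff_const).norm_sq ℝ)

set_option maxHeartbeats 1000000 in
/-- asymptotic equicontinuity in space -/
lemma Good.spaceEq {n : ℕ} {H : En n → En n → ℝ} {w : En n → ℝ} {u : En n × ℝ → ℝ} {C : ℝ}
    (g : Good H w u C) {ε : ℝ} (hε : 0 < ε) : ∃ ρ S : ℝ, 0 < ρ ∧ 0 ≤ S ∧ ∀ x y t, S ≤ t →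
      ‖x - y‖ ≤ ρ → u (x, t) - u (y, t) ≤ ε := by
  obtain ⟨δ, S, hδ, hS, htime⟩ := g.timeEq (half_pos hε)
  obtain ⟨M, hM⟩ := g.bdd
  have hM0 : 0 ≤ M := (abs_nonneg _).trans (hM 0 0 le_rfl)
  set N := (2 * M + 1) / δ ^ 2 with hN
  have hNδ : N * δ ^ 2 = 2 * M + 1 := by rw [hN]; field_simp
  have hN0 : 0 < N := by positivity
  obtain ⟨R, hR⟩ := g.hcoer (2 * N * δ + C + 1)
  set L := 2 * max R 1 with hL
  have hL0 : 0 < L := by have := le_max_right R 1; linarith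
  refine ⟨ε / (8 * L), S + δ + 1, by positivity, by linarith, fun x y t0 ht0 hxy => ?_⟩
  have hc : IsCompact (Metric.closedBall y 1 ×ˢ Icc (t0 - δ) (t0 + δ)) :=
    (isCompact_closedBall _ _).prod isCompact_Icc
  have hu := hc.uniformContinuousOn_of_continuous g.cu.continuousOn
  rw [Metric.uniformContinuousOn_iff_le] at hu
  obtain ⟨δ', hδ', hu⟩ := hu (ε / 4) (by positivity)
  set τ := min (min δ' 1) (ε / (8 * L)) with hτ
  have hτ0 : 0 < τ := by positivity
  have hτ1 : τ ≤ δ' := (min_le_left _ _).trans (min_le_left _ _)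
  have hτ2 : τ ≤ 1 := (min_le_left _ _).trans (min_le_right _ _)
  have hτ3 : τ ≤ ε / (8 * L) := min_le_right _ _
  have hLε : L * (ε / (8 * L)) = ε / 8 := by field_simp
  set h : En n → ℝ := fun x => L * √(τ ^ 2 + ‖x - y‖ ^ 2) with hh
  have hcd : ContDiff ℝ 1 h := contDiff_cone hτ0 y
  have hle : ∀ z, h z ≤ L * (τ + ‖z - y‖) := by
    intro z
    refine mul_le_mul_of_nonneg_left ?_ hL0.le
    refine Real.sqrt_le_iff.2 ⟨by positivity, ?_⟩
    nlinarith [norm_nonneg (z - y)]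
  have hge1 : ∀ z, L * τ ≤ h z := fun z => mul_le_mul_of_nonneg_left
    (Real.le_sqrt_of_sq_le (by nlinarith [norm_nonneg (z - y)])) hL0.le
  have hge2 : ∀ z, L * ‖z - y‖ ≤ h z := fun z => mul_le_mul_of_nonneg_left
    (Real.le_sqrt_of_sq_le (by nlinarith [norm_nonneg (z - y)])) hL0.le
  set R1 := τ + (2 * M + 1) / L + ‖x - y‖ with hR1
  have hLR1 : L * R1 = L * τ + (2 * M + 1) + L * ‖x - y‖ := by rw [hR1]; field_simp
  have hR10 : 0 < R1 := by positivity
  have hK : IsCompact (Metric.closedBall y R1 ×ˢ Icc (t0 - δ) (t0 + δ)) :=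
    (isCompact_closedBall _ _).prod isCompact_Icc
  have hcont : Continuous (fun q : En n × ℝ => u q - (N * (q.2 - t0) ^ 2 + 1 * h q.1)) := by
    have := g.cu
    have := hcd.continuous
    fun_prop
  obtain ⟨⟨z, t⟩, hz, hmax⟩ := hK.exists_isMaxOn
    ⟨(y, t0), by simp [hR10.le], by constructor <;> linarith⟩ hcont.continuousOn
  rw [isMaxOn_iff] at hmax
  obtain ⟨hzb, hzt⟩ := hz
  have hzt' : t0 - δ ≤ t ∧ t ≤ t0 + δ := hzt
  have hy := hmax (y, t0) ⟨by simp [hR10.le], by constructor <;> linarith⟩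
  have hx := hmax (x, t0) ⟨by
    rw [Metric.mem_closedBall, dist_eq_norm, hR1]; have : 0 ≤ τ + (2 * M + 1) / L := by positivity
    linarith, by constructor <;> linarith⟩
  simp only [sub_self] at hy hx
  have hyy : h y = L * τ := by simp [hh, Real.sqrt_sq hτ0.le]
  rw [hyy] at hy
  have b1 := abs_le.1 (hM z t (by linarith))
  have b2 := abs_le.1 (hM y t0 (by linarith))
  have hin1 : ‖z - y‖ < R1 := by
    by_contra hcon
    push Not at hcon
    have := mul_le_mul_of_nonneg_left hcon hL0.le
    have := hge2 z
    have : 0 ≤ N * (t - t0) ^ 2 := by positivity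
    have : 0 ≤ L * ‖x - y‖ := by positivity
    linarith
  have hsq : N * (t - t0) ^ 2 < N * δ ^ 2 := by
    rw [hNδ]
    have := hge1 z
    linarith
  have hin2 : |t - t0| < δ := by
    have := lt_of_mul_lt_mul_left hsq hN0.le
    exact abs_lt_of_sq_lt_sq this hδ.le
  have hin2' := abs_lt.1 hin2
  have hloc : IsLocalMax (fun q : En n × ℝ => u q - (N * (q.2 - t0) ^ 2 + 1 * h q.1)) (z, t) := by
    have hn : Metric.ball y R1 ×ˢ Ioo (t0 - δ) (t0 + δ) ∈ 𝓝 (z, t) :=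
      (Metric.isOpen_ball.prod isOpen_Ioo).mem_nhds
        ⟨by simpa [dist_eq_norm] using hin1, by constructor <;> linarith⟩
    filter_upwards [hn] with q hq
    exact hmax q ⟨Metric.ball_subset_closedBall hq.1, Ioo_subset_Icc_self hq.2⟩
  have hd : HasDerivAt (fun t : ℝ => N * (t - t0) ^ 2) (2 * N * (t - t0)) t := by
    have := ((((hasDerivAt_id t).sub_const t0).pow 2).const_mul N)
    refine this.congr_deriv ?_
    simp; ring
  have key := g.hsub.test (fun t => N * (t - t0) ^ 2) (fun _ => 1) h (by fun_prop) (by fun_prop)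
    hcd z t (2 * N * (t - t0)) 0 _ (by linarith) hd (hasDerivAt_const _ _)
    (hasGradientAt_cone hτ0 y z) hloc
  have hzy : ‖z - y‖ ≤ τ := by
    by_contra hcon
    push Not at hcon
    have hs : 0 < √(τ ^ 2 + ‖z - y‖ ^ 2) := by positivity
    have := hR z ((1 : ℝ) • ((L / √(τ ^ 2 + ‖z - y‖ ^ 2)) • (z - y))) (by
      rw [one_smul, norm_smul, Real.norm_eq_abs, abs_of_pos (by positivity), div_mul_eq_mul_div,
        le_div_iff₀ hs]
      have h1 : √(τ ^ 2 + ‖z - y‖ ^ 2) ≤ 2 * ‖z - y‖ :=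
        Real.sqrt_le_iff.2 ⟨by positivity, by
          have := pow_le_pow_left₀ hτ0.le hcon.le 2
          have : (2 * ‖z - y‖) ^ 2 = 4 * ‖z - y‖ ^ 2 := by ring
          have : 0 ≤ ‖z - y‖ ^ 2 := by positivity
          linarith⟩
      calc R * √(τ ^ 2 + ‖z - y‖ ^ 2) ≤ max R 1 * √(τ ^ 2 + ‖z - y‖ ^ 2) :=
            mul_le_mul_of_nonneg_right (le_max_left _ _) hs.le
        _ ≤ max R 1 * (2 * ‖z - y‖) := mul_le_mul_of_nonneg_left h1 (by positivity)
        _ = L * ‖z - y‖ := by rw [hL]; ring)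
    have e : C * Real.exp (-2 * t) ≤ C := by
      have : Real.exp (-2 * t) ≤ 1 := Real.exp_le_one_iff.2 (by linarith)
      exact (mul_le_mul_of_nonneg_left this g.hC).trans_eq (mul_one C)
    have : 2 * N * (-δ) ≤ 2 * N * (t - t0) := mul_le_mul_of_nonneg_left (by linarith) (by positivity)
    simp only at key
    linarith
  have f1 := hu (z, t) ⟨by simpa [dist_eq_norm] using hzy.trans hτ2, hzt⟩ (y, t)
    ⟨by simp, hzt⟩ (by
      rw [Prod.dist_eq, dist_self, dist_eq_norm]; exact max_le (hzy.trans hτ1) hδ'.le)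
  rw [Real.dist_eq] at f1
  have f2 := le_of_abs_le f1
  have f3 := htime y t0 t (by linarith) (by linarith) hin2.le
  have f4 := hle x
  have f5 := mul_le_mul_of_nonneg_left hxy hL0.le
  have f6 := mul_le_mul_of_nonneg_left hτ3 hL0.le
  have f7 : 0 ≤ N * (t - t0) ^ 2 := by positivity
  have f8 := hge1 z
  have f9 : 0 < L * τ := by positivity
  rw [hLε] at f5 f6
  have : L * (τ + ‖x - y‖) = L * τ + L * ‖x - y‖ := by ring
  norm_num at hx
  linarith

open MeasureTheory Filter Topology Set

lemma SingleSub.sub_const {n : ℕ} {H : En n → En n → ℝ} {w : En n → ℝ} {c : ℝ}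
    (h : SingleSub H w c) (D : ℝ) : SingleSub H (fun x => w x - D) c := by
  intro φ hφ x₀ hm
  refine h φ hφ x₀ ?_
  refine Filter.Eventually.mono hm fun x hx => ?_
  linarith

/-- logistic function -/
noncomputable def lgs (K κ S s : ℝ) : ℝ := (1 + (K - 1) * Real.exp (-κ * (s - S)))⁻¹

section lgs
variable {K κ S s : ℝ}

lemma lgs_den (hK : 2 ≤ K) : 1 < 1 + (K - 1) * Real.exp (-κ * (s - S)) := by
  have := Real.exp_pos (-κ * (s - S))
  have : 0 < (K - 1) * Real.exp (-κ * (s - S)) := mul_pos (by linarith) this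
  linarith

lemma lgs_pos (hK : 2 ≤ K) : 0 < lgs K κ S s := inv_pos.2 (by linarith [lgs_den (κ := κ) (S := S) (s := s) hK])

lemma lgs_lt (hK : 2 ≤ K) : lgs K κ S s < 1 := inv_lt_one_of_one_lt₀ (lgs_den hK)

lemma lgs_S (_hK : 2 ≤ K) : lgs K κ S S = K⁻¹ := by simp [lgs]

lemma lgs_contDiff (hK : 2 ≤ K) : ContDiff ℝ 1 (lgs K κ S) := by
  unfold lgs
  refine ContDiff.inv (by fun_prop) fun s => ?_
  linarith [lgs_den (κ := κ) (S := S) (s := s) hK]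

lemma lgs_one_sub (hK : 2 ≤ K) :
    1 - lgs K κ S s = (K - 1) * Real.exp (-κ * (s - S)) * lgs K κ S s := by
  have := lgs_den (κ := κ) (S := S) (s := s) hK
  unfold lgs
  set a := (K - 1) * Real.exp (-κ * (s - S))
  have h2 : 1 + a ≠ 0 := by linarith
  field_simp
  ring

lemma lgs_deriv (hK : 2 ≤ K) :
    deriv (lgs K κ S) s = κ * lgs K κ S s * (1 - lgs K κ S s) := by
  have hd := lgs_den (κ := κ) (S := S) (s := s) hK
  have e2 : HasDerivAt (fun s : ℝ => -κ * (s - S)) (-κ) s := by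
    simpa using ((hasDerivAt_id s).sub_const S).const_mul (-κ)
  have := ((e2.exp.const_mul (K - 1)).const_add 1).fun_inv (by linarith)
  have h2 : deriv (lgs K κ S) s = _ := this.deriv
  rw [h2, lgs_one_sub hK, lgs]
  field_simp

lemma lgs_one_sub_le (hK : 2 ≤ K) : 1 - lgs K κ S s ≤ K * Real.exp (-κ * (s - S)) := by
  rw [lgs_one_sub hK]
  have h1 := lgs_lt (κ := κ) (S := S) (s := s) hK
  have h2 := lgs_pos (κ := κ) (S := S) (s := s) hK
  have h3 := Real.exp_pos (-κ * (s - S))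
  have h4 : 0 < (K - 1) * Real.exp (-κ * (s - S)) := mul_pos (by linarith) h3
  nlinarith

lemma lgs_le_one_sub (hK : 2 ≤ K) (hκ : 0 ≤ κ) (hκ2 : κ ≤ 2) (hs : S ≤ s) :
    Real.exp (-2 * (s - S)) / 2 ≤ 1 - lgs K κ S s := by
  have h0 : Real.exp (-2 * (s - S)) ≤ Real.exp (-κ * (s - S)) :=
    Real.exp_le_exp.2 (by nlinarith)
  have h1 : Real.exp (-κ * (s - S)) ≤ 1 := Real.exp_le_one_iff.2 (by nlinarith)
  have h3 := Real.exp_pos (-κ * (s - S))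
  have h4 := lgs_den (κ := κ) (S := S) (s := s) hK
  suffices Real.exp (-κ * (s - S)) / 2 ≤ 1 - lgs K κ S s by linarith
  rw [lgs_one_sub hK, lgs, ← div_eq_mul_inv, le_div_iff₀ (by linarith)]
  set e := Real.exp (-κ * (s - S))
  have : (K - 1) * e ≤ K - 1 := by nlinarith
  nlinarith
end lgs

def Mono {n : ℕ} (a : En n × ℝ → ℝ) : Prop :=
  ∀ η ε : ℝ, 0 < η → 0 < ε → ∃ S : ℝ, 0 ≤ S ∧ ∀ x s t, S ≤ s → s ≤ t →
    a (x, s) - a (x, t) ≤ ε + η * (t - s)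

set_option maxHeartbeats 1000000 in
theorem Good.monoPlus {n : ℕ} {H : En n → En n → ℝ} {w : En n → ℝ} {u : En n × ℝ → ℝ} {C : ℝ}
    (g : Good H w u C) {η₀ : ℝ} (hη₀ : 0 < η₀) (h8 : A8plus H η₀) : Mono u := by
  intro η ε hη hε
  obtain ⟨M, hM⟩ := g.bdd
  obtain ⟨m, hm⟩ := bounded_of_periodic' g.cw g.pw
  have hM0 : 0 ≤ M := (abs_nonneg _).trans (hM 0 0 le_rfl)
  have hm0 : 0 ≤ m := (abs_nonneg _).trans (hm 0)
  set K := 2 * (M + m) + 2 with hK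
  have hK2 : 2 ≤ K := by linarith
  set D := M + m + 1 with hD
  set w1 : En n → ℝ := fun x => w x - D with hw1
  have hlo : ∀ x t, 0 ≤ t → 1 ≤ u (x, t) - w1 x := fun x t ht => by
    have := abs_le.1 (hM x t ht)
    have := abs_le.1 (hm x)
    simp only [hw1]; linarith
  have hhi : ∀ x t, 0 ≤ t → u (x, t) - w1 x ≤ K := fun x t ht => by
    have := abs_le.1 (hM x t ht)
    have := abs_le.1 (hm x)
    simp only [hw1]; linarith
  set η' := min (η / 2) η₀ with hη'
  obtain ⟨ψ, hψ, h8⟩ := h8 η' (by positivity) (min_le_right _ _)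
  set κ := min 1 (ψ / (2 * K)) with hκ
  have hK0 : 0 < K := by linarith
  have hκ0 : 0 < κ := by positivity
  have hκ1 : κ ≤ 1 := min_le_left _ _
  have hκK : κ * K ≤ ψ / 2 := by
    have : κ ≤ ψ / (2 * K) := min_le_right _ _
    calc κ * K ≤ ψ / (2 * K) * K := mul_le_mul_of_nonneg_right this hK0.le
      _ = ψ / 2 := by field_simp
  obtain ⟨S, hS0, hS⟩ := exp_small C (ε := min (η / 2) (ψ / 8)) (by positivity)
  set μ := lgs K κ S with hμ
  have claim : ∀ x s t, S ≤ s → s ≤ t →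
      μ s * (u (x, s) - w1 x) - (u (x, t) - w1 x) - η * (t - s) ≤ 0 := by
    intro x1 s1 t1 hs1 ht1
    by_contra hcon
    push Not at hcon
    set D0 := μ s1 * (u (x1, s1) - w1 x1) - (u (x1, t1) - w1 x1) - η * (t1 - s1) with hD0
    set σ := D0 / (2 * (s1 - S + 1)) with hσ
    have hσ0 : 0 < σ := by
      have : 0 < s1 - S + 1 := by linarith
      positivity
    have hσ1 : σ * (s1 - S) ≤ D0 / 2 := by
      have : 0 < s1 - S + 1 := by linarith
      have : σ * (s1 - S + 1) = D0 / 2 := by rw [hσ]; field_simp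
      nlinarith
    set ν := min η σ with hν
    have hν0 : 0 < ν := by positivity
    set Λ := max t1 (S + K / ν + 1) with hΛ
    have hΛ1 : t1 ≤ Λ := le_max_left _ _
    have hΛ2 : S + K / ν + 1 ≤ Λ := le_max_right _ _
    have hΛ3 : K < ν * (Λ - S) := by
      have : ν * (K / ν + 1) = K + ν := by field_simp
      have : ν * (K / ν + 1) ≤ ν * (Λ - S) := mul_le_mul_of_nonneg_left (by linarith) hν0.le
      linarith
    set KK : Set (ℝ × ℝ) := (Icc S Λ ×ˢ Icc S Λ) ∩ {q | q.1 ≤ q.2} with hKK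
    set O : Set (ℝ × ℝ) := (Ioo S Λ ×ˢ Ioo S Λ) ∩ {q | q.1 < q.2} with hO
    have hKKc : IsCompact KK :=
      (isCompact_Icc.prod isCompact_Icc).inter_right (isClosed_le continuous_fst continuous_snd)
    have hOo : IsOpen O :=
      (isOpen_Ioo.prod isOpen_Ioo).inter (isOpen_lt continuous_fst continuous_snd)
    have hOK : O ⊆ KK := inter_subset_inter (prod_mono Ioo_subset_Icc_self Ioo_subset_Icc_self)
      (fun q (hq : q.1 < q.2) => (le_of_lt hq : q.1 ≤ q.2))
    have hcu := g.cu
    obtain ⟨x, s, t, p, q, hx, hst, hval, h1, h2, h3⟩ := master g.hHc g.hcoer (A := u) (B := u)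
      (f := fun q => C * Real.exp (-2 * q.2)) (g := fun q => -(C * Real.exp (-2 * q.2)))
      (w := w1) (α := μ) (γ := fun s => 1 - μ s) (θ := fun s => σ * (s - S)) (c := 0) (η := η)
      (m1 := D0 / 2) (K := KK) (O := O)
      g.cu g.cu (by fun_prop) (by fun_prop) (g.cw.sub continuous_const) g.pu g.pu
      (fun x k => by simp only [hw1, g.pw x k]) g.hsub g.hsup (g.hw.sub_const D)
      (lgs_contDiff hK2) (contDiff_const.sub (lgs_contDiff hK2)) (by fun_prop)
      (fun s => lgs_pos hK2) (fun s => by linarith [lgs_lt (κ := κ) (S := S) (s := s) hK2])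
      hKKc hOo hOK (fun s t h => ⟨by linarith [h.1.1.1], by linarith [h.1.2.1]⟩)
      ⟨x1, s1, t1, ⟨⟨⟨hs1, by linarith⟩, ⟨by linarith, hΛ1⟩⟩, ht1⟩, by
        simp only [Th]; linarith⟩
      (by
        intro x s t hK hnO
        obtain ⟨⟨⟨a1, a2⟩, ⟨a3, a4⟩⟩, a5⟩ := hK
        simp only at a1 a2 a3 a4 a5
        change s ≤ t at a5
        have l1 := hlo x s (by linarith)
        have l2 := hlo x t (by linarith)
        have l3 := hhi x s (by linarith)
        have l4 := lgs_lt (κ := κ) (S := S) (s := s) hK2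
        have l5 := lgs_pos (κ := κ) (S := S) (s := s) hK2
        have l6 : 0 ≤ σ * (s - S) := mul_nonneg hσ0.le (by linarith)
        have l7 : 0 ≤ η * (t - s) := mul_nonneg hη.le (by linarith)
        suffices μ s * (u (x, s) - w1 x) - (u (x, t) - w1 x) - η * (t - s) - σ * (s - S) ≤ 0 by
          simp only [Th]; linarith
        rcases eq_or_lt_of_le a1 with b1 | b1
        · subst b1
          have : μ S * (u (x, S) - w1 x) ≤ 1 := by
            rw [hμ, lgs_S hK2, inv_mul_le_iff₀ hK0]; linarith
          linarith
        rcases eq_or_lt_of_le a5 with b2 | b2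
        · subst b2
          have : μ s * (u (x, s) - w1 x) ≤ 1 * (u (x, s) - w1 x) :=
            mul_le_mul_of_nonneg_right l4.le (by linarith)
          linarith
        rcases eq_or_lt_of_le a4 with b3 | b3
        · rw [← b3] at hΛ3
          have : μ s * (u (x, s) - w1 x) ≤ 1 * (u (x, s) - w1 x) :=
            mul_le_mul_of_nonneg_right l4.le (by linarith)
          have k1 : ν * (t - s) ≤ η * (t - s) :=
            mul_le_mul_of_nonneg_right (min_le_left _ _) (by linarith)
          have k2 : ν * (s - S) ≤ σ * (s - S) :=
            mul_le_mul_of_nonneg_right (min_le_right _ _) (by linarith)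
          linarith
        · exact absurd ⟨⟨⟨b1, by simp only; linarith⟩, ⟨by simp only; linarith, b3⟩⟩, b2⟩ hnO)
    obtain ⟨⟨⟨a1, a2⟩, ⟨a3, a4⟩⟩, a5⟩ := hst
    simp only at a1 a2 a3 a4
    change s < t at a5
    have l1 := hlo x s (by linarith)
    have l3 := hhi x s (by linarith)
    have l4 : μ s < 1 := lgs_lt (κ := κ) (S := S) (s := s) hK2
    have l5 : 0 < μ s := lgs_pos (κ := κ) (S := S) (s := s) hK2
    have l6 : deriv μ s = κ * μ s * (1 - μ s) := lgs_deriv hK2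
    have l7 : Real.exp (-2 * (s - S)) / 2 ≤ 1 - μ s :=
      lgs_le_one_sub hK2 hκ0.le (by linarith) a1.le
    have d1 : deriv (fun s => σ * (s - S)) s = σ := by
      have : HasDerivAt (fun s => σ * (s - S)) σ s := by
        simpa using ((hasDerivAt_id s).sub_const S).const_mul σ
      exact this.deriv
    have d2 : deriv (fun s => 1 - μ s) s = - deriv μ s := by
      rw [deriv_const_sub]
    have hq : H x q ≤ 0 := by
      rcases h3 with h3 | h3
      · linarith
      · exact h3
    rw [d1, d2] at h1
    have es : C * Real.exp (-2 * s) = C * Real.exp (-2 * S) * Real.exp (-2 * (s - S)) := by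
      rw [← exp_shift]; ring_nf
    have eS := (hS S le_rfl).trans (min_le_right _ _)
    have et1 : C * Real.exp (-2 * t) ≤ C * Real.exp (-2 * s) :=
      mul_le_mul_of_nonneg_left (Real.exp_le_exp.2 (by linarith)) g.hC
    have et2 := (hS t (by linarith)).trans (min_le_left _ _)
    have key := h8 x (μ s • (p - q)) q (by
      have e : μ s • (p - q) + q = μ s • p + (1 - μ s) • q := by module
      rw [e]
      simp only at h2
      have : η' ≤ η / 2 := min_le_left _ _
      linarith) hq (μ s) l5 l4.le
    have e1 : μ s • (p - q) + q = μ s • p + (1 - μ s) • q := by module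
    have e2 : (μ s)⁻¹ • μ s • (p - q) + q = p := by
      rw [smul_smul, inv_mul_cancel₀ l5.ne', one_smul]; abel
    rw [e1, e2] at key
    simp only at h1 h2
    -- bound the derivative term
    have n1 : deriv μ s * (u (x, s) - w1 x) ≤ ψ / 2 * (1 - μ s) := by
      rw [l6]
      have k1 : 0 ≤ κ * μ s * (1 - μ s) := mul_nonneg (by positivity) (by linarith)
      calc κ * μ s * (1 - μ s) * (u (x, s) - w1 x) ≤ κ * μ s * (1 - μ s) * K :=
            mul_le_mul_of_nonneg_left l3 k1
        _ = (κ * K) * (1 - μ s) * μ s := by ring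
        _ ≤ (κ * K) * (1 - μ s) * 1 :=
            mul_le_mul_of_nonneg_left l4.le (mul_nonneg (by positivity) (by linarith))
        _ ≤ ψ / 2 * (1 - μ s) := by
            rw [mul_one]; exact mul_le_mul_of_nonneg_right hκK (by linarith)
    have n2 : μ s * (C * Real.exp (-2 * s)) ≤ C * Real.exp (-2 * s) := by
      have : 0 ≤ C * Real.exp (-2 * s) := mul_nonneg g.hC (Real.exp_pos _).le
      nlinarith
    have n3 : C * Real.exp (-2 * s) ≤ ψ / 8 * Real.exp (-2 * (s - S)) := by
      rw [es]; exact mul_le_mul_of_nonneg_right eS (Real.exp_pos _).le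
    have n4 : ψ / 2 * (Real.exp (-2 * (s - S)) / 2) ≤ ψ / 2 * (1 - μ s) :=
      mul_le_mul_of_nonneg_left l7 (by positivity)
    linarith
  -- conclusion
  have hlim : Tendsto (fun s : ℝ => K * K * Real.exp (-κ * (s - S))) atTop (𝓝 (K * K * 0)) := by
    refine Tendsto.const_mul _ (Real.tendsto_exp_atBot.comp ?_)
    exact (tendsto_atTop_add_const_right _ (-S) tendsto_id).const_mul_atTop_of_neg (by linarith)
  rw [mul_zero] at hlim
  obtain ⟨S', hS'⟩ := eventually_atTop.1 (hlim.eventually (ge_mem_nhds hε))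
  refine ⟨max S S', hS0.trans (le_max_left _ _), fun x s t hs hst => ?_⟩
  have c1 := claim x s t ((le_max_left _ _).trans hs) hst
  have c2 := hS' s ((le_max_right _ _).trans hs)
  have hs0 : 0 ≤ s := hS0.trans ((le_max_left _ _).trans hs)
  have l1 := hlo x s hs0
  have l3 := hhi x s hs0
  have l4 : 1 - μ s ≤ K * Real.exp (-κ * (s - S)) := lgs_one_sub_le hK2
  have l5 : μ s < 1 := lgs_lt hK2
  have : (1 - μ s) * (u (x, s) - w1 x) ≤ K * Real.exp (-κ * (s - S)) * K :=
    mul_le_mul l4 l3 (by linarith) (by positivity)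
  linarith

open MeasureTheory Filter Topology Set

lemma H_nonneg {n : ℕ} (hn : 1 ≤ n) {H : En n → En n → ℝ}
    (hHc : Continuous fun q : En n × En n => H q.1 q.2) (hcoer : Coercive H) {η₀ : ℝ}
    (hη₀ : 0 < η₀) (h8 : A8minus H η₀) (x P : En n) : 0 ≤ H x P := by
  by_contra hcon
  push Not at hcon
  obtain ⟨ψ, hψ, h8⟩ := h8 (min (-H x P) η₀) (lt_min (by linarith) hη₀) (min_le_right _ _)
  obtain ⟨r, hr⟩ := hcoer 1
  set q : En n := EuclideanSpace.single (⟨0, hn⟩ : Fin n) |r| with hq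
  have hq1 : 1 ≤ H x q := hr x q (by simp [hq, le_abs_self])
  have key : ∀ k : ℕ, H x (((k : ℝ) + 1)⁻¹ • (P - q) + q) ≤ 0 := by
    intro k
    have hk : (1 : ℝ) ≤ (k : ℝ) + 1 := by linarith [(Nat.cast_nonneg k : (0 : ℝ) ≤ k)]
    have h1 := h8 x (P - q) q (by
      rw [sub_add_cancel]
      linarith [min_le_left (-H x P) η₀]) (by linarith) (k + 1) hk
    rw [sub_add_cancel] at h1
    have h2 : 0 ≤ ψ * ((k : ℝ) + 1 - 1) / ((k : ℝ) + 1) := by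
      have : (0 : ℝ) ≤ (k : ℝ) + 1 - 1 := by linarith
      positivity
    by_contra hc
    push Not at hc
    have : 0 < ((k : ℝ) + 1) * H x (((k : ℝ) + 1)⁻¹ • (P - q) + q) := mul_pos (by linarith) hc
    linarith
  have hlim : Tendsto (fun k : ℕ => H x (((k : ℝ) + 1)⁻¹ • (P - q) + q)) atTop (𝓝 (H x q)) := by
    have e : Tendsto (fun k : ℕ => ((k : ℝ) + 1)⁻¹) atTop (𝓝 0) := by
      simpa [one_div] using (tendsto_one_div_add_atTop_nhds_zero_nat (𝕜 := ℝ))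
    have c : Continuous (fun a : ℝ => H x (a • (P - q) + q)) := by
      have : Continuous (fun a : ℝ => ((x, a • (P - q) + q) : En n × En n)) := by fun_prop
      exact hHc.comp this
    have := (c.tendsto 0).comp e
    simpa [Function.comp_def] using this
  have := le_of_tendsto hlim (Eventually.of_forall key)
  linarith

theorem Good.monoMinus {n : ℕ} (hn : 1 ≤ n) {H : En n → En n → ℝ} {w : En n → ℝ}
    {u : En n × ℝ → ℝ} {C : ℝ}
    (g : Good H w u C) {η₀ : ℝ} (hη₀ : 0 < η₀) (h8 : A8minus H η₀) : Mono (fun q => - u q) := by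
  intro η ε hη hε
  obtain ⟨S, hS0, hS⟩ := exp_small C hε
  refine ⟨S, hS0, fun x s t hs hst => ?_⟩
  have hC := g.hC
  have cu := g.cu
  have hsup : SingleSuper H (fun x => u (x, s)) 0 := fun φ _ x₀ _ =>
    H_nonneg hn g.hHc g.hcoer hη₀ h8 _ _
  have k := compare_exp (d := 0) (a := C * Real.exp (-2 * s)) (b := 0)
    (A := fun q => u (q.1, q.2 + s)) (B := fun q => u (q.1, s))
    g.hHc g.hcoer (by fun_prop) (by fun_prop) g.cw (fun x k t => g.pu x k _)
    (fun x k t => g.pu x k _) g.pw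
    ((g.hsub.shift s (hS0.trans hs)).mono (fun x t _ => by simp only; rw [exp_shift]))
    (hsup.evol.mono (fun x t _ => by simp)) g.hw
    (by positivity) (by simp) x (t - s) (by linarith)
  simp only [sub_add_cancel] at k
  have := hS s hs
  have : 0 ≤ C * Real.exp (-2 * s) := by positivity
  have : 0 ≤ η * (t - s) := mul_nonneg hη.le (by linarith)
  simp only
  linarith

lemma net {ι : Type*} {l : Filter ι} [l.NeBot] {n : ℕ} {F : ι → En n → ℝ} {G : En n → ℝ}
    (pF : ∀ i, ZPeriodic (F i)) (hlim : ∀ x, Tendsto (fun i => F i x) l (𝓝 (G x)))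
    (heq : ∀ ε : ℝ, 0 < ε → ∃ ρ : ℝ, 0 < ρ ∧ ∀ᶠ i in l, ∀ x y, ‖x - y‖ ≤ ρ → F i x - F i y ≤ ε) :
    ∀ ε : ℝ, 0 < ε → ∀ᶠ i in l, ∀ x, |F i x - G x| ≤ ε := by
  intro ε hε
  have pG : ZPeriodic G := fun x k => by
    refine tendsto_nhds_unique (hlim _) ?_
    simpa only [pF _ x k] using hlim x
  obtain ⟨ρ, hρ, he⟩ := heq (ε / 3) (by positivity)
  have hG : ∀ x y, ‖x - y‖ ≤ ρ → G x - G y ≤ ε / 3 := fun x y hxy =>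
    le_of_tendsto ((hlim x).sub (hlim y)) (he.mono fun i hi => hi x y hxy)
  obtain ⟨t, -, htf, hcov⟩ := (isCompact_closedBall (0 : En n) (√n)).finite_cover_balls hρ
  have h1 : ∀ᶠ i in l, ∀ y ∈ t, |F i y - G y| ≤ ε / 3 := by
    rw [eventually_all_finite htf]
    intro y _
    have := (hlim y).sub_const (G y)
    rw [sub_self] at this
    have := this.abs
    rw [abs_zero] at this
    exact this.eventually (ge_mem_nhds (by positivity))
  filter_upwards [he, h1] with i h2 h3 x
  obtain ⟨v, hv⟩ := exists_intVec n x
  rw [← pF i x v, ← pG x v]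
  obtain ⟨y, hy, hxy⟩ := mem_iUnion₂.1 (hcov (by simpa using hv))
  rw [Metric.mem_ball, dist_eq_norm] at hxy
  have hyx : ‖y - (x + intVec n v)‖ ≤ ρ := by rw [norm_sub_rev]; exact hxy.le
  have a1 := h2 _ _ hxy.le
  have a2 := h2 _ _ hyx
  have a3 := hG _ _ hxy.le
  have a4 := hG _ _ hyx
  have a5 := abs_le.1 (h3 y hy)
  rw [abs_le]; constructor <;> linarith

instance : UF.NeBot := by unfold UF; infer_instance

theorem converge {n : ℕ} {a : En n × ℝ → ℝ} (pa : ZPeriodicST a)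
    (hbd : ∃ M, ∀ x t, 0 ≤ t → |a (x, t)| ≤ M)
    (hsp : ∀ ε : ℝ, 0 < ε → ∃ ρ S : ℝ, 0 < ρ ∧ 0 ≤ S ∧ ∀ x y t, S ≤ t →
      ‖x - y‖ ≤ ρ → a (x, t) - a (y, t) ≤ ε)
    (hct : ∀ ε : ℝ, 0 < ε → ∃ S : ℝ, 0 ≤ S ∧ ∀ s1 s2 d, S ≤ s1 → S ≤ s2 →
      (∀ x, a (x, s1) - a (x, s2) ≤ d) → ∀ x t, 0 ≤ t → a (x, s1 + t) - a (x, s2 + t) ≤ d + ε)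
    (hm : Mono a) : ∃ v : En n → ℝ, ZPeriodic v ∧ UnifTendsTo a v := by
  obtain ⟨M, hM⟩ := hbd
  have hev : ∀ S h : ℝ, ∀ᶠ k : ℕ in UF, S ≤ k + h := fun S h => by
    refine UF_le ?_
    have : Tendsto (fun k : ℕ => (k : ℝ) + h) atTop atTop :=
      tendsto_atTop_add_const_right _ _ tendsto_natCast_atTop_atTop
    exact this.eventually_ge_atTop S
  have hU : ∀ x h, ∃ y, Tendsto (fun k : ℕ => a (x, k + h)) UF (𝓝 y) := fun x h => by
    obtain ⟨y, -, hy⟩ := UF_lim (isCompact_Icc (a := -M) (b := M)) (fun k : ℕ => a (x, k + h))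
      ((hev 0 h).mono fun k hk => abs_le.1 (hM x _ hk))
    exact ⟨y, hy⟩
  choose U hU using hU
  have pU : ∀ h, ZPeriodic (fun x => U x h) := fun h x k => by
    refine tendsto_nhds_unique (hU _ h) ?_
    simpa only [pa x k] using hU x h
  have hUm : ∀ x, Monotone (U x) := fun x h h' hh => by
    refine le_of_forall_pos_le_add fun ε hε => ?_
    set η := ε / 2 / (h' - h + 1) with hη
    have hp : 0 < h' - h + 1 := by linarith
    have hη0 : 0 < η := by positivity
    have hη1 : η * (h' - h + 1) = ε / 2 := by rw [hη]; field_simp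
    obtain ⟨S, hS0, hS⟩ := hm η (ε / 2) hη0 (by positivity)
    have := le_of_tendsto (b := ε / 2 + η * (h' - h)) ((hU x h).sub (hU x h'))
      ((hev S h).mono fun k hk => by
        have := hS x (k + h) (k + h') hk (by linarith)
        rwa [add_sub_add_left_eq_sub] at this)
    nlinarith
  have hUb : ∀ x h, |U x h| ≤ M := fun x h => by
    refine abs_le.2 ⟨ge_of_tendsto (hU x h) ?_, le_of_tendsto (hU x h) ?_⟩
    · exact (hev 0 h).mono fun k hk => (abs_le.1 (hM x _ hk)).1
    · exact (hev 0 h).mono fun k hk => (abs_le.1 (hM x _ hk)).2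
  have hUs : ∀ ε : ℝ, 0 < ε → ∃ ρ : ℝ, 0 < ρ ∧ ∀ h x y, ‖x - y‖ ≤ ρ → U x h - U y h ≤ ε := by
    intro ε hε
    obtain ⟨ρ, S, hρ, -, hs⟩ := hsp ε hε
    exact ⟨ρ, hρ, fun h x y hxy => le_of_tendsto ((hU x h).sub (hU y h))
      ((hev S h).mono fun k hk => hs x y _ hk hxy)⟩
  have hUu : ∀ h ε, 0 < ε → ∀ᶠ k : ℕ in UF, ∀ x, |a (x, k + h) - U x h| ≤ ε := by
    intro h
    refine net (F := fun (k : ℕ) x => a (x, k + h)) (fun k x v => pa x v _) (fun x => hU x h) ?_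
    intro ε hε
    obtain ⟨ρ, S, hρ, -, hs⟩ := hsp ε hε
    exact ⟨ρ, hρ, (hev S h).mono fun k hk x y hxy => hs x y _ hk hxy⟩
  set v : En n → ℝ := fun x => ⨆ h, U x h with hv
  have hbdd : ∀ x, BddAbove (range (U x)) := fun x =>
    ⟨M, by rintro _ ⟨h, rfl⟩; exact (abs_le.1 (hUb x h)).2⟩
  have hvl : ∀ x, Tendsto (fun h => U x h) atTop (𝓝 (v x)) := fun x =>
    tendsto_atTop_ciSup (hUm x) (hbdd x)
  have hvle : ∀ x h, U x h ≤ v x := fun x h => le_ciSup (hbdd x) h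
  have pv : ZPeriodic v := fun x k => by simp only [hv, fun h => pU h x k]
  refine ⟨v, pv, fun ε hε => ?_⟩
  have hvu := net (l := (atTop : Filter ℝ)) (F := fun h x => U x h) pU hvl (by
    intro ε hε
    obtain ⟨ρ, hρ, h⟩ := hUs ε hε
    exact ⟨ρ, hρ, Eventually.of_forall h⟩) (ε / 4) (by positivity)
  obtain ⟨h, hh⟩ := hvu.exists
  obtain ⟨S, hS0, hS⟩ := hct (ε / 4) (by positivity)
  have hgood := (hUu h (ε / 8) (by positivity)).and (hev S h)
  obtain ⟨k, hk1, hk2⟩ := hgood.exists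
  refine ⟨k + h, fun t ht x => ?_⟩
  set τ := t - (k + h) with hτ
  have hτ0 : 0 ≤ τ := by linarith
  have c1 : a (x, t) - U x (h + τ) ≤ ε / 2 := by
    refine le_of_tendsto (tendsto_const_nhds.sub (hU x (h + τ))) (hgood.mono fun k' hk' => ?_)
    have := hS (k + h) (k' + h) (ε / 4) hk2 hk'.2 (fun x => by
      have := abs_le.1 (hk1 x); have := abs_le.1 (hk'.1 x); linarith) x τ hτ0
    rw [show (k : ℝ) + h + τ = t by rw [hτ]; ring, add_assoc (k' : ℝ)] at this
    linarith
  have c2 : U x (h + τ) - a (x, t) ≤ ε / 2 := by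
    refine le_of_tendsto ((hU x (h + τ)).sub tendsto_const_nhds) (hgood.mono fun k' hk' => ?_)
    have := hS (k' + h) (k + h) (ε / 4) hk'.2 hk2 (fun x => by
      have := abs_le.1 (hk1 x); have := abs_le.1 (hk'.1 x); linarith) x τ hτ0
    rw [show (k : ℝ) + h + τ = t by rw [hτ]; ring, add_assoc (k' : ℝ)] at this
    linarith
  have c3 := hvle x (h + τ)
  have c4 := hUm x (show h ≤ h + τ by linarith)
  have c5 := abs_le.1 (hh x)
  rw [abs_le]; constructor <;> linarith

lemma Good.converge {n : ℕ} {H : En n → En n → ℝ} {w : En n → ℝ} {u : En n × ℝ → ℝ} {C : ℝ}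
    (hn : 1 ≤ n) (g : Good H w u C) {η₀ : ℝ} (hη₀ : 0 < η₀) (h8 : A8plus H η₀ ∨ A8minus H η₀) :
    ∃ v : En n → ℝ, ZPeriodic v ∧ UnifTendsTo u v := by
  obtain ⟨M, hM⟩ := g.bdd
  rcases h8 with h8 | h8
  · refine _root_.converge g.pu ⟨M, hM⟩ (fun ε hε => g.spaceEq hε) (fun ε hε => ?_)
      (g.monoPlus hη₀ h8)
    obtain ⟨S, hS0, hS⟩ := exp_small C hε
    refine ⟨S, hS0, fun s1 s2 d h1 h2 h x t ht => ?_⟩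
    linarith [g.contr hS0 h1 h2 h x t ht, hS S le_rfl]
  · obtain ⟨v, pv, hv⟩ := _root_.converge (a := fun q => - u q)
      (fun x k t => by simp only [g.pu x k t])
      ⟨M, fun x t ht => by rw [abs_neg]; exact hM x t ht⟩ (fun ε hε => by
        obtain ⟨ρ, S, h1, h2, h3⟩ := g.spaceEq hε
        refine ⟨ρ, S, h1, h2, fun x y t ht hxy => ?_⟩
        have := h3 y x t ht (by rwa [norm_sub_rev])
        linarith) (fun ε hε => by
        obtain ⟨S, hS0, hS⟩ := exp_small C hε
        refine ⟨S, hS0, fun s1 s2 d h1 h2 h x t ht => ?_⟩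
        have := g.contr hS0 h2 h1 (d := d) (fun x => by linarith [h x]) x t ht
        linarith [hS S le_rfl])
      (g.monoMinus hn hη₀ h8)
    · refine ⟨fun x => - v x, fun x k => by simp only [pv x k], fun ε hε => ?_⟩
      obtain ⟨T, hT⟩ := hv ε hε
      refine ⟨T, fun t ht x => ?_⟩
      have := hT t ht x
      rw [← abs_neg]
      convert this using 2
      ring

open MeasureTheory Filter Topology Set

lemma continuous_gradient {n : ℕ} {φ : En n → ℝ} (hφ : ContDiff ℝ 1 φ) :
    Continuous (gradient φ) := by
  have : Continuous (fderiv ℝ φ) := hφ.continuous_fderiv one_ne_zero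
  unfold gradient
  exact (LinearIsometryEquiv.continuous _).comp this

lemma hasGradientAt_add_sq {n : ℕ} {φ : En n → ℝ} (hφ : ContDiff ℝ 1 φ) (x₀ x : En n) :
    HasGradientAt (fun x => φ x + 1 * ‖x - x₀‖ ^ 2)
      (gradient φ x + (2 * 1 : ℝ) • (x - x₀)) x := by
  have h1 : HasGradientAt φ (gradient φ x) x :=
    (hφ.differentiable one_ne_zero).differentiableAt.hasGradientAt
  have h2 := hasGradientAt_sq 1 x₀ x
  rw [hasGradientAt_iff_hasFDerivAt] at h1 h2 ⊢
  rw [map_add]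
  exact h1.add h2

lemma stable_sub {n : ℕ} {H : En n → En n → ℝ}
    (hHc : Continuous fun q : En n × En n => H q.1 q.2) {u : En n × ℝ → ℝ} {v : En n → ℝ} {C : ℝ}
    (cu : Continuous u) (hu : SubF H u (fun q => C * Real.exp (-2 * q.2)))
    (huv : UnifTendsTo u v) : SingleSub H v 0 := by
  intro φ hφ x₀ hmax
  by_contra hcon
  push Not at hcon
  set H0 := H x₀ (gradient φ x₀) with hH0
  have cg := continuous_gradient hφ
  have cQ : Continuous (fun q : En n × ℝ =>
      2 * q.2 + H q.1 (gradient φ q.1 + (2 * 1 : ℝ) • (q.1 - x₀))) := by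
    have c1 : Continuous (fun q : En n × ℝ =>
      ((q.1, gradient φ q.1 + (2 * 1 : ℝ) • (q.1 - x₀)) : En n × En n)) := by fun_prop
    have c2 := hHc.comp c1
    exact (by fun_prop : Continuous (fun q : En n × ℝ => 2 * q.2)).add c2
  have hQ : ∀ᶠ q : En n × ℝ in 𝓝 (x₀, 0), H0 / 2 <
      2 * q.2 + H q.1 (gradient φ q.1 + (2 * 1 : ℝ) • (q.1 - x₀)) := by
    refine (cQ.tendsto (x₀, 0)).eventually (lt_mem_nhds ?_)
    simp only [sub_self, smul_zero, add_zero, mul_zero, zero_add]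
    linarith
  obtain ⟨δ0, hδ0, hQ⟩ := Metric.eventually_nhds_iff.1 hQ
  obtain ⟨r, hr, hmax⟩ := Metric.eventually_nhds_iff.1 hmax
  set δ := min (min (δ0 / 2) (r / 4)) (1 / 2) with hδ
  have hδp : 0 < δ := by positivity
  have hδ1 : δ < δ0 := by
    have : δ ≤ δ0 / 2 := (min_le_left _ _).trans (min_le_left _ _)
    linarith
  have hδ2 : δ ≤ r / 4 := (min_le_left _ _).trans (min_le_right _ _)
  have hδ3 : δ ≤ 1 / 2 := min_le_right _ _
  obtain ⟨T1, hT1⟩ := huv (δ ^ 2 / 4) (by positivity)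
  obtain ⟨T2, hT20, hT2⟩ := exp_small C (ε := H0 / 2) (by linarith)
  set T := max T1 T2 + 1 with hT
  have hTT1 : T1 ≤ T - 1 := by rw [hT]; linarith [le_max_left T1 T2]
  have hTT2 : T2 ≤ T - 1 := by rw [hT]; linarith [le_max_right T1 T2]
  set h : En n → ℝ := fun x => φ x + 1 * ‖x - x₀‖ ^ 2 with hh
  have hcd : ContDiff ℝ 1 h := hφ.add (contDiff_sq 1 x₀)
  have hK : IsCompact (Metric.closedBall x₀ (r / 2) ×ˢ Icc (T - 1) (T + 1)) :=
    (isCompact_closedBall _ _).prod isCompact_Icc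
  have hcont : Continuous (fun q : En n × ℝ => u q - ((q.2 - T) ^ 2 + 1 * h q.1)) := by
    have := hcd.continuous
    fun_prop
  have hmem0 : ((x₀, T) : En n × ℝ) ∈ Metric.closedBall x₀ (r / 2) ×ˢ Icc (T - 1) (T + 1) :=
    ⟨Metric.mem_closedBall_self (by linarith), by constructor <;> linarith⟩
  obtain ⟨⟨z, t⟩, hz, hm⟩ := hK.exists_isMaxOn ⟨(x₀, T), hmem0⟩ hcont.continuousOn
  rw [isMaxOn_iff] at hm
  have hy := hm (x₀, T) hmem0
  obtain ⟨hzb, hzt⟩ := hz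
  have hzt' : T - 1 ≤ t ∧ t ≤ T + 1 := hzt
  have hzb' : dist z x₀ ≤ r / 2 := hzb
  have v1 := hmax (y := z) (by linarith)
  simp only [hh, sub_self, norm_zero] at hy
  have b1 := abs_le.1 (hT1 t (by linarith) z)
  have b2 := abs_le.1 (hT1 T (by linarith) x₀)
  have hsum : (t - T) ^ 2 + ‖z - x₀‖ ^ 2 ≤ δ ^ 2 / 2 := by
    norm_num at hy
    linarith
  have hδsq : 0 < δ ^ 2 := by positivity
  have ht : |t - T| < δ := abs_lt_of_sq_lt_sq (by nlinarith [sq_nonneg ‖z - x₀‖]) hδp.le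
  have hzx : ‖z - x₀‖ < δ := lt_of_pow_lt_pow_left₀ 2 hδp.le (by nlinarith [sq_nonneg (t - T)])
  have ht' := abs_lt.1 ht
  have hloc : IsLocalMax (fun q : En n × ℝ => u q - ((q.2 - T) ^ 2 + 1 * h q.1)) (z, t) := by
    have hn : Metric.ball x₀ (r / 2) ×ˢ Ioo (T - 1) (T + 1) ∈ 𝓝 (z, t) :=
      (Metric.isOpen_ball.prod isOpen_Ioo).mem_nhds
        ⟨by rw [Metric.mem_ball, dist_eq_norm]; linarith, by constructor <;> linarith⟩
    filter_upwards [hn] with q hq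
    exact hm q ⟨Metric.ball_subset_closedBall hq.1, Ioo_subset_Icc_self hq.2⟩
  have hd : HasDerivAt (fun t : ℝ => (t - T) ^ 2) (2 * (t - T)) t := by
    have := (((hasDerivAt_id t).sub_const T).pow 2)
    refine this.congr_deriv ?_
    simp
  have key := hu.test (fun t => (t - T) ^ 2) (fun _ => 1) h (by fun_prop) (by fun_prop)
    hcd z t (2 * (t - T)) 0 _ (by linarith) hd (hasDerivAt_const _ _)
    (hasGradientAt_add_sq hφ x₀ z) hloc
  have q1 := hQ (y := (z, t - T)) (by
    rw [Prod.dist_eq, dist_eq_norm, Real.dist_eq, sub_zero]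
    exact max_lt (hzx.trans hδ1) (ht.trans hδ1))
  have q2 := hT2 t (by linarith)
  simp only [one_smul, zero_mul, add_zero, mul_one] at key q1
  linarith

lemma Good.stable {n : ℕ} {H : En n → En n → ℝ} {w : En n → ℝ} {u : En n × ℝ → ℝ} {C : ℝ}
    (g : Good H w u C) {v : En n → ℝ} (huv : UnifTendsTo u v) :
    Continuous v ∧ SingleSub H v 0 ∧ SingleSuper H v 0 := by
  refine ⟨?_, stable_sub g.hHc g.cu g.hsub huv, ?_⟩
  · have ht : TendstoUniformly (fun (t : ℝ) x => u (x, t)) v atTop := by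
      rw [Metric.tendstoUniformly_iff]
      intro ε hε
      obtain ⟨T, hT⟩ := huv (ε / 2) (half_pos hε)
      filter_upwards [eventually_ge_atTop T] with t ht x
      rw [dist_comm, Real.dist_eq]
      linarith [hT t ht x]
    have cu := g.cu
    exact ht.continuous (Eventually.of_forall fun t => by fun_prop).frequently
  · have hHc := g.hHc
    have cu := g.cu
    have h1 := stable_sub (H := fun x p => - H x (-p)) (u := fun q => - u q) (v := fun x => - v x)
      (C := C) (by
        have c1 : Continuous (fun q : En n × En n => ((q.1, -q.2) : En n × En n)) := by fun_prop
        exact (hHc.comp c1).neg) (by fun_prop)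
      (g.hsup.neg.mono fun x t _ => by simp) (by
        intro ε hε
        obtain ⟨T, hT⟩ := huv ε hε
        refine ⟨T, fun t ht x => ?_⟩
        have := hT t ht x
        rwa [← abs_neg, show -(-u (x, t) - -v x) = u (x, t) - v x by ring])
    intro φ hφ x₀ hm
    have := h1 (fun x => - φ x) hφ.neg x₀ (by
      refine hm.neg.congr (Eventually.of_forall fun q => by simp; ring))
    rw [gradient_neg'] at this
    simp only [neg_neg] at this
    linarith

lemma evol_sub {n : ℕ} {H : En n → En n → ℝ} {u uo : En n × ℝ → ℝ} (h : EvolSubIneq H u uo) :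
    SubF H u (fun q => uo q - u q) := fun φ hφ x t ht hm => by
  have := h φ hφ x t ht hm
  simp only
  linarith

lemma evol_super {n : ℕ} {H : En n → En n → ℝ} {u uo : En n × ℝ → ℝ} (h : EvolSuperIneq H u uo) :
    SuperF H u (fun q => uo q - u q) := fun φ hφ x t ht hm => by
  have := h φ hφ x t ht hm
  simp only
  linarith

lemma ext_cont {n : ℕ} {u : En n × ℝ → ℝ} (h : ContinuousOn u {q : En n × ℝ | 0 ≤ q.2}) :
    Continuous (fun q : En n × ℝ => u (q.1, max q.2 0)) :=
  h.comp_continuous (by fun_prop) (fun q => (le_max_right q.2 0 : (0 : ℝ) ≤ max q.2 0))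

/-- Convergence Result 3 (Theorem 1.3). -/
theorem stmt18 (n : ℕ) (hn : 1 ≤ n) (H : En n → En n → ℝ)
    (hHcont : Continuous fun q : En n × En n => H q.1 q.2)
    (hHper : ZPeriodicH H) (hHcoer : Coercive H)
    (hA8 : ∃ η₀ : ℝ, 0 < η₀ ∧ (A8plus H η₀ ∨ A8minus H η₀))
    (herg : ∃ w : En n → ℝ, IsLip w ∧ ZPeriodic w ∧ SingleSolution H w 0)
    (u₀₁ u₀₂ : En n → ℝ) (hu₀₁ : Continuous u₀₁) (hu₀₂ : Continuous u₀₂)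
    (hu₀₁per : ZPeriodic u₀₁) (hu₀₂per : ZPeriodic u₀₂)
    (u₁ u₂ : En n × ℝ → ℝ) (hu₁per : ZPeriodicST u₁) (hu₂per : ZPeriodicST u₂)
    (hsol : SysSolution H H u₀₁ u₀₂ u₁ u₂) :
    ∃ v : En n → ℝ, ZPeriodic v ∧ ErgSolution H H v v 0 ∧
      UnifTendsTo u₁ v ∧ UnifTendsTo u₂ v := by
  obtain ⟨η₀, hη₀, h8⟩ := hA8
  obtain ⟨w, -, pw, cw, hw, hw'⟩ := herg
  obtain ⟨c1, c2, ⟨s1, s2⟩, ⟨p1, p2⟩, -, -⟩ := hsol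
  set A : En n × ℝ → ℝ := fun q => u₁ (q.1, max q.2 0) with hA
  set B : En n × ℝ → ℝ := fun q => u₂ (q.1, max q.2 0) with hB
  have cA : Continuous A := ext_cont c1
  have cB : Continuous B := ext_cont c2
  have pA : ZPeriodicST A := fun x k t => hu₁per x k _
  have pB : ZPeriodicST B := fun x k t => hu₂per x k _
  have eA : ∀ x t, 0 < t → u₁ (x, t) = A (x, t) := fun x t ht => by simp [hA, max_eq_left ht.le]
  have eB : ∀ x t, 0 < t → u₂ (x, t) = B (x, t) := fun x t ht => by simp [hB, max_eq_left ht.le]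
  have sA : SubF H A (fun q => B q - A q) :=
    ((evol_sub s1).congr eA).mono fun x t ht => by simp only [eA x t ht, eB x t ht]; exact le_rfl
  have sB : SubF H B (fun q => A q - B q) :=
    ((evol_sub s2).congr eB).mono fun x t ht => by simp only [eA x t ht, eB x t ht]; exact le_rfl
  have tA : SuperF H A (fun q => B q - A q) :=
    ((evol_super p1).congr eA).mono fun x t ht => by simp only [eA x t ht, eB x t ht]; exact le_rfl
  have tB : SuperF H B (fun q => A q - B q) :=
    ((evol_super p2).congr eB).mono fun x t ht => by simp only [eA x t ht, eB x t ht]; exact le_rfl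
  obtain ⟨C, hC⟩ := bounded_of_periodic (A := fun q => A q - B q) (cA.sub cB)
    (fun x k t => by simp only [pA x k t, pB x k t]) 0
  have hC0 : 0 ≤ C := (abs_nonneg _).trans (hC 0 0 le_rfl le_rfl)
  have d1 := decay hHcont hHcoer cA cB cw pA pB pw sA tB hw (C := C)
    (fun x => le_of_abs_le (hC x 0 le_rfl le_rfl))
  have d2 := decay hHcont hHcoer cB cA cw pB pA pw sB tA hw (C := C)
    (fun x => by have := (abs_le.1 (hC x 0 le_rfl le_rfl)).1; linarith)
  have g : Good H w A C :=
    { hHc := hHcont, hcoer := hHcoer, cu := cA, pu := pA, cw := cw, pw := pw, hC := hC0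
      hsub := sA.mono fun x t ht => d2 x t ht.le
      hsup := tA.mono fun x t ht => by have := d1 x t ht.le; simp only; linarith
      hw := hw, hw' := hw' }
  obtain ⟨v, pv, hv⟩ := g.converge hn hη₀ h8
  obtain ⟨cv, vs, vS⟩ := g.stable hv
  have hsub : StatSubIneq H 1 v v (fun _ => 0) := fun φ hφ x hx => by
    have := vs φ hφ x hx
    simpa using this
  have hsup : StatSuperIneq H 1 v v (fun _ => 0) := fun φ hφ x hx => by
    have := vS φ hφ x hx
    simpa using this
  refine ⟨v, pv, ⟨cv, cv, ⟨hsub, hsub⟩, ⟨hsup, hsup⟩⟩, fun ε hε => ?_, fun ε hε => ?_⟩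
  · obtain ⟨T, hT⟩ := hv ε hε
    refine ⟨max T 1, fun t ht x => ?_⟩
    rw [eA x t (by linarith [le_max_right T 1])]
    exact hT t ((le_max_left _ _).trans ht) x
  · obtain ⟨T, hT⟩ := hv (ε / 2) (half_pos hε)
    obtain ⟨S, hS0, hS⟩ := exp_small C (half_pos hε)
    refine ⟨max (max T S) 1, fun t ht x => ?_⟩
    have t0 : 0 < t := by linarith [le_max_right (max T S) 1]
    have t1 := ((le_max_left _ _).trans (le_max_left _ _)).trans ht
    have t2 := ((le_max_right T S).trans (le_max_left _ _)).trans ht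
    rw [eB x t t0]
    have k1 := abs_le.1 (hT t t1 x)
    have k2 := hS t t2
    have k3 := d1 x t t0.le
    have k4 := d2 x t t0.le
    rw [abs_le]; constructor <;> linarith
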